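/- Let B = (B₁,…,B_N) be a tuple of finite subsets of ℤ^N such that both AF-descendant tuples B' = (B₁,B₁,B₃,…,B_N) (B₂ replaced by a second copy of B₁) and B'' = (B₂,B₂,B₃,…,B_N) (B₁ replaced by a second copy of B₂) are linearly independent. Then MV(B₁,B₁,B₃,…,B_N) ≤ MV(B₁,…,B_N)². -/

import Mathlib

open Pointwise MeasureTheory

namespace Esterov

/-- The standard embedding of the lattice `ℤⁿ` into `ℝⁿ`. -/
def toR {n : ℕ} (a : Fin n → ℤ) : Fin n → ℝ := fun j => (a j : ℝ)

/-- The lattice mixed volume of finite sets `A₁, …, Aₙ ⊆ ℤⁿ`: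
`MV(A₁,…,Aₙ) = ∑_{∅ ≠ S ⊆ {1,…,n}} (−1)^{n−|S|} vol (conv (∑_{i ∈ S} Aᵢ))`. -/
noncomputable def MV {n : ℕ} (A : Fin n → Finset (Fin n → ℤ)) : ℝ :=
  ∑ S ∈ Finset.univ.powerset.filter (fun S : Finset (Fin n) => S.Nonempty),
    (-1 : ℝ) ^ (n - S.card) *
      (volume (convexHull ℝ (∑ i ∈ S, toR '' (A i : Set (Fin n → ℤ))))).toReal

/-- The complex torus `(ℂ∖0)ⁿ`. -/
abbrev Torus (n : ℕ) := Fin n → ℂˣ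

/-- The index type of the coefficients of a tuple of supports. -/
abbrev CIdx {n : ℕ} (A : Fin n → Finset (Fin n → ℤ)) := Σ i : Fin n, {a : Fin n → ℤ // a ∈ A i}

/-- The space `ℂ^A = ℂ^{A₁} ⊕ ⋯ ⊕ ℂ^{Aₙ}` of systems of Laurent polynomials supported at `A`,
encoded by their coefficients. -/
abbrev Coeff {n : ℕ} (A : Fin n → Finset (Fin n → ℤ)) := CIdx A → ℂ

/-- The value of the Laurent monomial `x^a` at a point `x` of the torus. -/
noncomputable def mono {n : ℕ} (a : Fin n → ℤ) (x : Torus n) : ℂ :=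
  ∏ j, ((x j : ℂ) ^ (a j))

/-- The value of the `i`-th polynomial of the system `c ∈ ℂ^A` at `x`. -/
noncomputable def evalAt {n : ℕ} (A : Fin n → Finset (Fin n → ℤ)) (c : Coeff A) (i : Fin n)
    (x : Torus n) : ℂ :=
  ∑ a ∈ (A i).attach, c ⟨i, a⟩ * mono a.1 x

/-- `x` is a common root of the system `c ∈ ℂ^A`. -/
def IsRoot {n : ℕ} (A : Fin n → Finset (Fin n → ℤ)) (c : Coeff A) (x : Torus n) : Prop :=
  ∀ i, evalAt A c i x = 0

/-- The Jacobian matrix `(∂fᵢ/∂xⱼ (x))` of the system `c ∈ ℂ^A` at `x`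
(note `∂(x^a)/∂xⱼ = aⱼ x^a / xⱼ`). -/
noncomputable def jacobian {n : ℕ} (A : Fin n → Finset (Fin n → ℤ)) (c : Coeff A)
    (x : Torus n) : Matrix (Fin n) (Fin n) ℂ :=
  Matrix.of fun i j => (∑ a ∈ (A i).attach, c ⟨i, a⟩ * (a.1 j : ℂ) * mono a.1 x) * (x j : ℂ)⁻¹

/-- `x` is a singular root of the system `c`: a common root at which the Jacobian matrix
is degenerate. -/
def IsSingularRoot {n : ℕ} (A : Fin n → Finset (Fin n → ℤ)) (c : Coeff A) (x : Torus n) :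
    Prop :=
  IsRoot A c x ∧ (jacobian A c x).det = 0

/-- A subset of `ℂ^ι` is algebraic if it is the common zero locus of a family of polynomials. -/
def IsAlgebraicSet {ι : Type*} (Z : Set (ι → ℂ)) : Prop :=
  ∃ S : Set (MvPolynomial ι ℂ), Z = {c | ∀ p ∈ S, MvPolynomial.eval c p = 0}

/-- The Zariski closure of a subset of `ℂ^ι`. -/
def zclosure {ι : Type*} (Z : Set (ι → ℂ)) : Set (ι → ℂ) :=
  ⋂₀ {W | IsAlgebraicSet W ∧ Z ⊆ W}

/-- The ideal of polynomials vanishing on a subset of `ℂ^ι`. -/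
noncomputable def vanishingIdeal {ι : Type*} (Z : Set (ι → ℂ)) : Ideal (MvPolynomial ι ℂ) where
  carrier := {p | ∀ c ∈ Z, MvPolynomial.eval c p = 0}
  add_mem' := by
    intro p q hp hq c hc
    simp [hp c hc, hq c hc]
  zero_mem' := by
    intro c hc
    simp
  smul_mem' := by
    intro p q hq c hc
    simp [smul_eq_mul, hq c hc]

/-- The (complex) dimension of a subset of `ℂ^ι`, as the Krull dimension of the coordinate
ring of its Zariski closure. -/
noncomputable def adim {ι : Type*} (Z : Set (ι → ℂ)) : WithBot ℕ∞ :=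
  ringKrullDim (MvPolynomial ι ℂ ⧸ vanishingIdeal Z)

/-- The discriminant `D_A`: the Zariski closure of the set of systems having a singular root. -/
noncomputable def discSet {n : ℕ} (A : Fin n → Finset (Fin n → ℤ)) : Set (Coeff A) :=
  zclosure {c | ∃ x, IsSingularRoot A c x}

/-- The tuple `A` is dual effective: `D_A` is a hypersurface, i.e. has complex dimension
`dim ℂ^A − 1`. -/
def DualEffective {n : ℕ} (A : Fin n → Finset (Fin n → ℤ)) : Prop :=
  adim (discSet A) = ((Fintype.card (CIdx A) - 1 : ℕ) : WithBot ℕ∞)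

/-- The finite set `s` can be translated into the subgroup `L` of `ℤⁿ`. -/
def TranslatesInto {n : ℕ} (s : Finset (Fin n → ℤ)) (L : Submodule ℤ (Fin n → ℤ)) : Prop :=
  ∃ v : Fin n → ℤ, ∀ a ∈ s, a - v ∈ L

/-- A tuple of finite sets in `ℤⁿ` is reduced if the sets cannot all be translated into one
common proper subgroup of `ℤⁿ`. -/
def IsReducedTuple {n : ℕ} (A : Fin n → Finset (Fin n → ℤ)) : Prop :=
  ¬ ∃ L : Submodule ℤ (Fin n → ℤ), L ≠ ⊤ ∧ ∀ i, TranslatesInto (A i) L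

/-- A tuple of `n` finite sets in `ℤⁿ` is irreducible if for no `m` with `0 < m < n` can some
`n − m` of the sets be translated into one common subgroup of rank at most `n − m`. -/
def IsIrreducibleTuple {n : ℕ} (A : Fin n → Finset (Fin n → ℤ)) : Prop :=
  ¬ ∃ (I : Finset (Fin n)) (L : Submodule ℤ (Fin n → ℤ)),
      0 < I.card ∧ I.card < n ∧ Module.finrank ℤ L ≤ I.card ∧
      ∀ i ∈ I, TranslatesInto (A i) L

/-- The incidence variety `E = {(x, f) : f(x) = 0} ⊆ (ℂ∖0)ⁿ × ℂ^A`. -/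
def incidence {n : ℕ} (A : Fin n → Finset (Fin n → ℤ)) : Set (Torus n × Coeff A) :=
  {p | IsRoot A p.2 p.1}

/-- The projection `π : E → ℂ^A`. -/
def proj {n : ℕ} (A : Fin n → Finset (Fin n → ℤ)) : incidence A → Coeff A :=
  fun p => p.1.2

/-- The set of roots of the system `c`. -/
def RootSet {n : ℕ} (A : Fin n → Finset (Fin n → ℤ)) (c : Coeff A) :=
  {x : Torus n // IsRoot A c x}

/-- `γ` is a loop in `ℂ^A ∖ B` based at `f`. -/
def IsLoop {n : ℕ} (A : Fin n → Finset (Fin n → ℤ)) (B : Set (Coeff A)) (f : Coeff A)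
    (γ : unitInterval → Coeff A) : Prop :=
  Continuous γ ∧ (∀ t, γ t ∉ B) ∧ γ 0 = f ∧ γ 1 = f

/-- The loop `γ` based at `f` induces the permutation `σ` of the root set of `f` by path
lifting: for every root `x` the lift of `γ` starting at `x` ends at `σ x`. -/
def Induces {n : ℕ} (A : Fin n → Finset (Fin n → ℤ)) (γ : unitInterval → Coeff A)
    (f : Coeff A) (σ : RootSet A f → RootSet A f) : Prop :=
  ∀ x : RootSet A f, ∃ δ : unitInterval → Torus n,
    Continuous δ ∧ δ 0 = x.1 ∧ (∀ t, IsRoot A (γ t) (δ t)) ∧ δ 1 = (σ x).1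

/-- A tuple of `k` finite sets `A₁,…,A_k ⊆ ℤⁿ` is linearly independent if for no `m` with
`0 < m ≤ k` can some `k − m + 1` of the sets be translated into one common subgroup of `ℤⁿ`
of rank at most `n − m`. -/
def LinIndepTuple {k n : ℕ} (A : Fin k → Finset (Fin n → ℤ)) : Prop :=
  ¬ ∃ (m : ℕ) (I : Finset (Fin k)) (L : Submodule ℤ (Fin n → ℤ)),
      0 < m ∧ m ≤ k ∧ I.card = k - m + 1 ∧ Module.finrank ℤ L ≤ n - m ∧
      ∀ i ∈ I, TranslatesInto (A i) L

/-!
The volume of a simple polytope is given by the Lawrence–Varchenko formula: a sum over the vertices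
of a power of the value of a generic linear functional `c` at the vertex, divided by the product of
the slopes of `c` along the edges there. Its polarization is the mixed volume of polytopes whose
normal fans are refined by that of the simple polytope, and it is recovered from the mixed volumes
of the facets, weighted by the support numbers of one of the polytopes. In this form the
Alexandrov–Fenchel inequality says that the mixed volume, as a quadratic form in the support
numbers, has at most one positive eigenvalue, which follows by induction on the dimension from the
Laplacian argument of Shenfeld and van Handel. Finitely many finite sets are always covered: a
generic perturbation of the facets of the Minkowski sum of their convex hulls is a simple polytope
whose fan refines all their normal fans.

The descendant inequality then only needs that the second descendant has mixed volume at least `1`.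
By Rado's theorem, a linearly independent tuple contains linearly independent segments; their mixed
volume is the absolute value of a nonzero integer determinant, and mixed volumes are monotone.
-/

/-! ### Linear coordinate systems -/

section CoordSystem

variable {ι 𝕜 E : Type*} [Field 𝕜] [AddCommGroup E] [Module 𝕜 E]

/-- The functionals `u i`, `i ∈ I`, are linear coordinates on `E`, i.e. a basis of its dual. -/
def IsCoordSystem (u : ι → Module.Dual 𝕜 E) (I : Finset ι) : Prop :=
  Function.Bijective (LinearMap.pi fun i : I => u i)

open Classical in
/-- The point of `E` whose coordinates `u i`, `i ∈ I`, are prescribed by `f` (zero if these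
functionals are not coordinates). For the facet normals of a simple polytope with right-hand
side `f`, it is the vertex lying on the facets in `I`. -/
noncomputable def solve (u : ι → Module.Dual 𝕜 E) (I : Finset ι) : (ι → 𝕜) →ₗ[𝕜] E :=
  if h : IsCoordSystem u I then
    (LinearEquiv.ofBijective _ h).symm ∘ₗ LinearMap.funLeft 𝕜 𝕜 ((↑) : I → ι)
  else 0

/-- The vector dual to the coordinate `u i` of the coordinate system `I`: the direction of the
edge which leaves the facet `i`, oriented by increasing `u i`. -/
noncomputable def edgeDir [DecidableEq ι] (u : ι → Module.Dual 𝕜 E) (I : Finset ι) (i : ι) : E :=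
  solve u I (Pi.single i 1)

/-- The coefficient at `u i` of a functional `c` in the basis `u i`, `i ∈ I`, of the dual. -/
noncomputable def slope [DecidableEq ι] (u : ι → Module.Dual 𝕜 E) (c : Module.Dual 𝕜 E)
    (I : Finset ι) (i : ι) : 𝕜 :=
  c (edgeDir u I i)

namespace IsCoordSystem

variable {u : ι → Module.Dual 𝕜 E} {I : Finset ι}

lemma ext (h : IsCoordSystem u I) {y z : E} (hyz : ∀ i ∈ I, u i y = u i z) : y = z :=
  h.injective <| funext fun i => hyz i i.2

lemma apply_solve (h : IsCoordSystem u I) (f : ι → 𝕜) {i : ι} (hi : i ∈ I) :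
    u i (solve u I f) = f i := by
  rw [solve, dif_pos h]
  exact congrFun ((LinearEquiv.ofBijective _ h).apply_symm_apply fun j : I => f j) ⟨i, hi⟩

lemma solve_eval (h : IsCoordSystem u I) (z : E) : solve u I (fun i => u i z) = z :=
  h.ext fun _ hi => h.apply_solve _ hi

lemma card_eq_finrank (h : IsCoordSystem u I) : I.card = Module.finrank 𝕜 E := by
  rw [(LinearEquiv.ofBijective _ h).finrank_eq, Module.finrank_fintype_fun_eq_card,
    Fintype.card_coe]

lemma of_card_eq_finrank [FiniteDimensional 𝕜 E] (hcard : I.card = Module.finrank 𝕜 E)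
    (h : ∀ y, (∀ i ∈ I, u i y = 0) → y = 0) : IsCoordSystem u I := by
  have hinj : Function.Injective (LinearMap.pi fun i : I => u i) :=
    (injective_iff_map_eq_zero _).mpr fun y hy => h y fun i hi => congrFun hy ⟨i, hi⟩
  exact ⟨hinj, (LinearMap.injective_iff_surjective_of_finrank_eq_finrank
    (by rw [Module.finrank_fintype_fun_eq_card, Fintype.card_coe, hcard])).mp hinj⟩

variable [DecidableEq ι]

lemma apply_edgeDir (h : IsCoordSystem u I) {j : ι} (hj : j ∈ I) (i : ι) :
    u j (edgeDir u I i) = if j = i then 1 else 0 := by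
  rw [edgeDir, h.apply_solve _ hj, Pi.single_apply]

lemma slope_self (h : IsCoordSystem u I) {i : ι} (hi : i ∈ I) : slope u (u i) I i = 1 := by
  simp [slope, h.apply_edgeDir hi]

lemma solve_eq_sum (h : IsCoordSystem u I) (f : ι → 𝕜) :
    solve u I f = ∑ i ∈ I, f i • edgeDir u I i := by
  refine h.ext fun j hj => ?_
  rw [h.apply_solve f hj, map_sum, Finset.sum_eq_single_of_mem j hj]
  · simp [h.apply_edgeDir hj]
  · intro i _ hij
    simp [h.apply_edgeDir hj, hij.symm]

lemma map_solve_eq_sum (h : IsCoordSystem u I) (c : Module.Dual 𝕜 E) (f : ι → 𝕜) :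
    c (solve u I f) = ∑ i ∈ I, f i * slope u c I i := by
  simp [h.solve_eq_sum, slope]

lemma map_eq_sum (h : IsCoordSystem u I) (c : Module.Dual 𝕜 E) (z : E) :
    c z = ∑ i ∈ I, u i z * slope u c I i := by
  conv_lhs => rw [← h.solve_eval z, h.map_solve_eq_sum]

lemma map_sub_map_solve (h : IsCoordSystem u I) (c : Module.Dual 𝕜 E) (z : E) (f : ι → 𝕜) :
    c z - c (solve u I f) = ∑ i ∈ I, (u i z - f i) * slope u c I i := by
  simp only [h.map_eq_sum c z, h.map_solve_eq_sum, ← Finset.sum_sub_distrib, sub_mul]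

variable {i k : ι}

lemma exchange [FiniteDimensional 𝕜 E] (h : IsCoordSystem u I) (hi : i ∈ I) (hk : k ∉ I)
    (hd : u k (edgeDir u I i) ≠ 0) : IsCoordSystem u (insert k (I.erase i)) := by
  have hki : k ∉ I.erase i := fun hk' => hk (Finset.mem_of_mem_erase hk')
  refine of_card_eq_finrank ?_ fun y hy => ?_
  · rw [Finset.card_insert_of_notMem hki, Finset.card_erase_add_one hi, h.card_eq_finrank]
  have hline : y = u i y • edgeDir u I i := by
    refine h.ext fun j hj => ?_
    rcases eq_or_ne j i with rfl | hji
    · simp [h.apply_edgeDir hi]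
    · simp [h.apply_edgeDir hj, hji,
        hy j (Finset.mem_insert_of_mem (Finset.mem_erase.mpr ⟨hji, hj⟩))]
  have hky : u i y * u k (edgeDir u I i) = 0 := by
    rw [← smul_eq_mul, ← map_smul, ← hline, hy k (Finset.mem_insert_self _ _)]
  rw [hline, (mul_eq_zero.mp hky).resolve_right hd, zero_smul]

lemma solve_exchange (h : IsCoordSystem u I) (h' : IsCoordSystem u (insert k (I.erase i)))
    (hd : u k (edgeDir u I i) ≠ 0) (f : ι → 𝕜) :
    solve u (insert k (I.erase i)) f =
      solve u I f + ((f k - u k (solve u I f)) / u k (edgeDir u I i)) • edgeDir u I i := by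
  refine h'.ext fun j hj => ?_
  rw [h'.apply_solve _ hj]
  rcases Finset.mem_insert.mp hj with rfl | hj
  · simp [div_mul_cancel₀ _ hd]
  · obtain ⟨hji, hj⟩ := Finset.mem_erase.mp hj
    simp [h.apply_solve _ hj, h.apply_edgeDir hj, hji]

lemma slope_exchange (h : IsCoordSystem u I) (hk : k ∉ I)
    (h' : IsCoordSystem u (insert k (I.erase i))) (hd : u k (edgeDir u I i) ≠ 0)
    (c : Module.Dual 𝕜 E) :
    slope u c (insert k (I.erase i)) k = slope u c I i / u k (edgeDir u I i) := by
  have h0 : solve u I (Pi.single k 1) = 0 := h.ext fun j hj => by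
    simp [h.apply_solve _ hj, ne_of_mem_of_not_mem hj hk]
  rw [slope, edgeDir, h.solve_exchange h' hd, h0]
  simp [slope, div_eq_inv_mul]

lemma slope_ne_zero_of_erase_eq {A : Finset ι} {a : ι} (h : IsCoordSystem u I)
    (hA : IsCoordSystem u A) (ha : a ∈ A) (hAI : A.erase a = I.erase i) :
    slope u (u i) A a ≠ 0 := by
  intro h0
  have hdir : edgeDir u A a = 0 := by
    refine h.ext fun j hj => ?_
    rcases eq_or_ne j i with rfl | hji
    · rw [map_zero]
      exact h0
    · obtain ⟨hja, hjA⟩ := Finset.mem_erase.mp (hAI ▸ Finset.mem_erase.mpr ⟨hji, hj⟩)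
      simp [hA.apply_edgeDir hjA, hja]
  simpa [hdir] using hA.apply_edgeDir ha a

end IsCoordSystem

end CoordSystem

/-! ### Simple polytopes and the simplex method -/

/-- A simple polytope `{z | ∀ j, u j z ≤ bound j}`, encoded by its vertices. A vertex is given by
the set `I` of facets through it; the normals of these facets are coordinates, the remaining
constraints are strict at the vertex, and the edge leaving a facet `i ∈ I` ends at another vertex,
which trades `i` for a facet `k`. The positive weights of the vertices transform under such
exchanges like the volumes of the parallelepipeds `{z | ∀ i ∈ I, 0 ≤ u i z ≤ 1}`. -/
structure SimplePolytope {ι E : Type*} [DecidableEq ι] [AddCommGroup E] [Module ℝ E]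
    (u : ι → Module.Dual ℝ E) where
  vertices : Finset (Finset ι)
  bound : ι → ℝ
  weight : Finset ι → ℝ
  nonempty : vertices.Nonempty
  isCoordSystem : ∀ I ∈ vertices, IsCoordSystem u I
  lt_bound : ∀ I ∈ vertices, ∀ j ∉ I, u j (solve u I bound) < bound j
  exists_exchange : ∀ I ∈ vertices, ∀ i ∈ I, ∃ k ∉ I,
    insert k (I.erase i) ∈ vertices ∧ u k (edgeDir u I i) < 0
  weight_pos : ∀ I ∈ vertices, 0 < weight I
  weight_exchange : ∀ I ∈ vertices, ∀ i ∈ I, ∀ k ∉ I, insert k (I.erase i) ∈ vertices →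
    weight (insert k (I.erase i)) * |u k (edgeDir u I i)| = weight I

namespace SimplePolytope

variable {ι E : Type*} [DecidableEq ι] [AddCommGroup E] [Module ℝ E]
  {u : ι → Module.Dual ℝ E} (P : SimplePolytope u)

/-- `J` is the set of facets containing some nonempty face of the polytope. -/
def IsFace (J : Finset ι) : Prop := ∃ I ∈ P.vertices, J ⊆ I

/-- The functional `c` is generic: it is not constant along any edge of the polytope. -/
def IsGeneric (c : Module.Dual ℝ E) : Prop := ∀ I ∈ P.vertices, ∀ i ∈ I, slope u c I i ≠ 0

variable {P} {c : Module.Dual ℝ E} {I I' J : Finset ι}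

lemma isFace_empty : P.IsFace ∅ := P.nonempty.imp fun I hI => ⟨hI, I.empty_subset⟩

lemma IsFace.mono (hJ : P.IsFace J) {J' : Finset ι} (h : J' ⊆ J) : P.IsFace J' :=
  hJ.imp fun _ hI => ⟨hI.1, h.trans hI.2⟩

lemma card_eq_of_mem (hI : I ∈ P.vertices) (hI' : I' ∈ P.vertices) : I.card = I'.card := by
  rw [(P.isCoordSystem I hI).card_eq_finrank, (P.isCoordSystem I' hI').card_eq_finrank]

lemma eq_of_subset (hI : I ∈ P.vertices) (hI' : I' ∈ P.vertices) (h : I ⊆ I') : I = I' :=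
  Finset.eq_of_subset_of_card_le h (card_eq_of_mem hI' hI).le

lemma IsGeneric.neg (hc : P.IsGeneric c) : P.IsGeneric (-c) := fun I hI i hi =>
  neg_ne_zero.mpr (hc I hI i hi)

lemma IsGeneric.smul (hc : P.IsGeneric c) {s : ℝ} (hs : s ≠ 0) : P.IsGeneric (s • c) :=
  fun I hI i hi => mul_ne_zero hs (hc I hI i hi)

lemma map_vertex_lt_of_slope_pos (hI : I ∈ P.vertices) (hI' : I' ∈ P.vertices) (hJ : J ⊆ I')
    (hpos : ∀ i ∈ I \ J, 0 < slope u c I i) (hne : I ≠ I') :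
    c (solve u I' P.bound) < c (solve u I P.bound) := by
  rw [← sub_neg, (P.isCoordSystem I hI).map_sub_map_solve]
  have hterm : ∀ i ∈ I, i ∉ I' →
      (u i (solve u I' P.bound) - P.bound i) * slope u c I i < 0 := fun i hi hi' =>
    mul_neg_of_neg_of_pos (sub_neg.mpr (P.lt_bound I' hI' i hi'))
      (hpos i (Finset.mem_sdiff.mpr ⟨hi, fun h => hi' (hJ h)⟩))
  obtain ⟨k, hk, hk'⟩ : ∃ k ∈ I, k ∉ I' := Finset.not_subset.mp
    fun h => hne (eq_of_subset hI hI' h)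
  refine Finset.sum_neg' (fun i hi => ?_) ⟨k, hk, hterm k hk hk'⟩
  by_cases hi' : i ∈ I'
  · simp [(P.isCoordSystem I' hI').apply_solve _ hi']
  · exact (hterm i hi hi').le

lemma eq_of_slope_pos (hI : I ∈ P.vertices) (hI' : I' ∈ P.vertices) (hJ : J ⊆ I) (hJ' : J ⊆ I')
    (hpos : ∀ i ∈ I \ J, 0 < slope u c I i) (hpos' : ∀ i ∈ I' \ J, 0 < slope u c I' i) :
    I = I' := by
  by_contra hne
  exact lt_asymm (map_vertex_lt_of_slope_pos hI hI' hJ' hpos hne)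
    (map_vertex_lt_of_slope_pos hI' hI hJ hpos' (Ne.symm hne))

lemma exists_exchange_map_lt (hI : I ∈ P.vertices) {i : ι} (hi : i ∈ I)
    (hneg : slope u c I i < 0) : ∃ k ∉ I, insert k (I.erase i) ∈ P.vertices ∧
      c (solve u I P.bound) < c (solve u (insert k (I.erase i)) P.bound) := by
  obtain ⟨k, hk, hI', hd⟩ := P.exists_exchange I hI i hi
  refine ⟨k, hk, hI', ?_⟩
  rw [(P.isCoordSystem I hI).solve_exchange (P.isCoordSystem _ hI') hd.ne, map_add, map_smul,
    smul_eq_mul, lt_add_iff_pos_right]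
  exact mul_pos_of_neg_of_neg
    (div_neg_of_pos_of_neg (sub_pos.mpr (P.lt_bound I hI k hk)) hd) hneg

lemma subset_exchange (hJ : J ⊆ I) {i : ι} (hi : i ∉ J) (k : ι) : J ⊆ insert k (I.erase i) :=
  (Finset.subset_erase.mpr ⟨hJ, hi⟩).trans (Finset.subset_insert _ _)

lemma IsFace.exists_slope_pos (hJ : P.IsFace J) (hc : P.IsGeneric c) :
    ∃ I ∈ P.vertices, J ⊆ I ∧ ∀ i ∈ I \ J, 0 < slope u c I i := by
  obtain ⟨I₀, hI₀, hJI₀⟩ := hJ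
  obtain ⟨I, hI, hmax⟩ := Finset.exists_max_image (P.vertices.filter (J ⊆ ·))
    (fun I => c (solve u I P.bound)) ⟨I₀, by simp [hI₀, hJI₀]⟩
  simp only [Finset.mem_filter] at hI hmax
  refine ⟨I, hI.1, hI.2, fun i hi => ?_⟩
  obtain ⟨hi, hiJ⟩ := Finset.mem_sdiff.mp hi
  refine (hc I hI.1 i hi).lt_or_gt.resolve_left fun hneg => ?_
  obtain ⟨k, -, hI', hlt⟩ := exists_exchange_map_lt hI.1 hi hneg
  exact (hmax _ ⟨hI', subset_exchange hI.2 hiJ k⟩).not_gt hlt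

lemma eq_of_forall_exchange_eq (hc : P.IsGeneric c) {α : Type*} (G : Finset ι → α)
    (hG : ∀ I ∈ P.vertices, J ⊆ I → ∀ i ∈ I, i ∉ J → ∀ k ∉ I,
      insert k (I.erase i) ∈ P.vertices → G (insert k (I.erase i)) = G I)
    (hI : I ∈ P.vertices) (hI' : I' ∈ P.vertices) (hJ : J ⊆ I) (hJ' : J ⊆ I') : G I = G I' := by
  obtain ⟨M, hM, hJM, hpos⟩ := IsFace.exists_slope_pos ⟨I, hI, hJ⟩ hc
  suffices key : ∀ I ∈ P.vertices, J ⊆ I → G I = G M by rw [key I hI hJ, key I' hI' hJ']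
  by_contra! hbad
  obtain ⟨A, hA, hJA, hGA⟩ := hbad
  classical
  obtain ⟨B, hB, hmax⟩ := Finset.exists_max_image (P.vertices.filter fun I => J ⊆ I ∧ G I ≠ G M)
    (fun I => c (solve u I P.bound)) ⟨A, by simp [hA, hJA, hGA]⟩
  simp only [Finset.mem_filter] at hB hmax
  obtain ⟨hB, hJB, hGB⟩ := hB
  obtain ⟨i, hi, hneg⟩ : ∃ i ∈ B \ J, slope u c B i < 0 := by
    by_contra! hnonneg
    refine hGB (congrArg G (eq_of_slope_pos hB hM hJB hJM (fun i hi => ?_) hpos))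
    exact (hnonneg i hi).lt_of_ne' (hc B hB i (Finset.mem_sdiff.mp hi).1)
  obtain ⟨hi, hiJ⟩ := Finset.mem_sdiff.mp hi
  obtain ⟨k, hk, hB', hlt⟩ := exists_exchange_map_lt hB hi hneg
  refine (hmax _ ⟨hB', subset_exchange hJB hiJ k, ?_⟩).not_gt hlt
  rwa [hG B hB hJB i hi hiJ k hk hB']

lemma insert_eq_insert_of_slope_pos {a b : ι} (ha : insert a J ∈ P.vertices)
    (hb : insert b J ∈ P.vertices) (hpos : 0 < slope u c (insert a J) a)
    (hpos' : 0 < slope u c (insert b J) b) : insert a J = insert b J := by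
  have hsdiff : ∀ {d i : ι}, i ∈ insert d J \ J → i = d := fun hi =>
    (Finset.mem_insert.mp (Finset.mem_sdiff.mp hi).1).resolve_right (Finset.mem_sdiff.mp hi).2
  exact eq_of_slope_pos ha hb (Finset.subset_insert _ _) (Finset.subset_insert _ _)
    (fun i hi => by rwa [hsdiff hi]) (fun i hi => by rwa [hsdiff hi])

lemma slope_exchange_neg {i k : ι} (hI : I ∈ P.vertices) (hi : i ∈ I) (hk : k ∉ I)
    (hI' : insert k (I.erase i) ∈ P.vertices) :
    slope u (u i) (insert k (I.erase i)) k < 0 := by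
  have hki : k ∉ I.erase i := fun h => hk (Finset.mem_of_mem_erase h)
  have hne := (P.isCoordSystem I hI).slope_ne_zero_of_erase_eq (P.isCoordSystem _ hI')
    (Finset.mem_insert_self k _) (Finset.erase_insert hki)
  refine hne.lt_or_gt.resolve_right fun hpos => hk ?_
  have heq : insert i (I.erase i) = insert k (I.erase i) := by
    refine insert_eq_insert_of_slope_pos (c := u i) ?_ hI' ?_ hpos <;> rw [Finset.insert_erase hi]
    · exact hI
    · rw [(P.isCoordSystem I hI).slope_self hi]
      exact one_pos
  rw [← Finset.insert_erase hi, heq]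
  exact Finset.mem_insert_self _ _

-- The functional `u i` is not constant on the edge `I.erase i`, whose vertices are thus separated
-- by the sign of its slope.
lemma eq_or_eq_of_erase_subset {i k : ι} (hI : I ∈ P.vertices) (hi : i ∈ I) (hk : k ∉ I)
    (hI' : insert k (I.erase i) ∈ P.vertices) {A : Finset ι} (hA : A ∈ P.vertices)
    (hAI : I.erase i ⊆ A) : A = I ∨ A = insert k (I.erase i) := by
  obtain ⟨a, haI, rfl⟩ := Finset.exists_eq_insert_iff.mpr
    ⟨hAI, by rw [Finset.card_erase_add_one hi, card_eq_of_mem hI hA]⟩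
  have hne := (P.isCoordSystem I hI).slope_ne_zero_of_erase_eq (P.isCoordSystem _ hA)
    (Finset.mem_insert_self a _) (Finset.erase_insert haI)
  rcases hne.lt_or_gt with hneg | hpos
  · refine .inr (insert_eq_insert_of_slope_pos (c := -u i) hA hI' (neg_pos.mpr hneg) ?_)
    exact neg_pos.mpr (slope_exchange_neg hI hi hk hI')
  · left
    nth_rw 2 [← Finset.insert_erase hi]
    refine insert_eq_insert_of_slope_pos (c := u i) hA ?_ hpos ?_ <;> rw [Finset.insert_erase hi]
    · exact hI
    · rw [(P.isCoordSystem I hI).slope_self hi]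
      exact one_pos

end SimplePolytope

/-! ### Mixed volumes of polytopes with given facet normals -/

namespace SimplePolytope

variable {ι E : Type*} [DecidableEq ι] [AddCommGroup E] [Module ℝ E]
  {u : ι → Module.Dual ℝ E} (P : SimplePolytope u)

/-- The mixed volume of the faces `J` of the polytopes `{z | ∀ j, u j z ≤ f j}`, `f ∈ m`, which
are assumed to have the same normal fan as `P`. The formula is the polarization of the one of
Lawrence and Varchenko, in which `c` is an auxiliary generic functional. Its normalization is
that of the mixed volume for `J = ∅`. -/
noncomputable def mixedVol (c : Module.Dual ℝ E) (J : Finset ι) (m : Multiset (ι → ℝ)) : ℝ :=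
  ∑ I ∈ P.vertices with J ⊆ I,
    P.weight I * (m.map fun f => c (solve u I f)).prod / ∏ k ∈ I \ J, slope u c I k

/-- The polytope `{z | ∀ j, u j z ≤ f j}` has a normal fan which is refined by that of `P`. -/
def IsNef (f : ι → ℝ) : Prop := ∀ I ∈ P.vertices, ∀ j, u j (solve u I f) ≤ f j

/-- The polytope `{z | ∀ j, u j z ≤ f j}` has the same normal fan as `P`. -/
def IsAmple (f : ι → ℝ) : Prop := ∀ I ∈ P.vertices, ∀ j ∉ I, u j (solve u I f) < f j

variable {P} {c : Module.Dual ℝ E} {I J : Finset ι} {m : Multiset (ι → ℝ)} {f g : ι → ℝ}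

section Nef

lemma isAmple_bound : P.IsAmple P.bound := P.lt_bound

lemma IsAmple.isNef (hf : P.IsAmple f) : P.IsNef f := fun I hI j => by
  by_cases hj : j ∈ I
  · exact ((P.isCoordSystem I hI).apply_solve f hj).le
  · exact (hf I hI j hj).le

lemma IsNef.add (hf : P.IsNef f) (hg : P.IsNef g) : P.IsNef (f + g) := fun I hI j => by
  simpa using add_le_add (hf I hI j) (hg I hI j)

lemma IsNef.add_isAmple (hf : P.IsNef f) (hg : P.IsAmple g) : P.IsAmple (f + g) :=
  fun I hI j hj => by simpa using add_lt_add_of_le_of_lt (hf I hI j) (hg I hI j hj)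

lemma IsAmple.smul (hf : P.IsAmple f) {r : ℝ} (hr : 0 < r) : P.IsAmple (r • f) :=
  fun I hI j hj => by simpa using mul_lt_mul_of_pos_left (hf I hI j hj) hr

end Nef

variable (P) in
lemma mixedVol_cons_add (c : Module.Dual ℝ E) (J : Finset ι) (f g : ι → ℝ)
    (m : Multiset (ι → ℝ)) :
    P.mixedVol c J ((f + g) ::ₘ m) = P.mixedVol c J (f ::ₘ m) + P.mixedVol c J (g ::ₘ m) := by
  simp only [mixedVol, Multiset.map_cons, Multiset.prod_cons, map_add, add_mul, mul_add, add_div,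
    Finset.sum_add_distrib]

variable (P) in
lemma mixedVol_cons_smul (c : Module.Dual ℝ E) (J : Finset ι) (r : ℝ) (f : ι → ℝ)
    (m : Multiset (ι → ℝ)) :
    P.mixedVol c J ((r • f) ::ₘ m) = r * P.mixedVol c J (f ::ₘ m) := by
  simp only [mixedVol, Multiset.map_cons, Multiset.prod_cons, map_smul, smul_eq_mul, Finset.mul_sum]
  exact Finset.sum_congr rfl fun I _ => by ring

variable (P) in
/-- The mixed volume `P.mixedVol c J (f ::ₘ m)` as a linear function of `f`. -/
noncomputable def mixedVolLinear (c : Module.Dual ℝ E) (J : Finset ι) (m : Multiset (ι → ℝ)) :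
    (ι → ℝ) →ₗ[ℝ] ℝ where
  toFun f := P.mixedVol c J (f ::ₘ m)
  map_add' f g := P.mixedVol_cons_add c J f g m
  map_smul' r f := P.mixedVol_cons_smul c J r f m

variable (P) in
lemma mixedVol_cons_eval (c : Module.Dual ℝ E) (J : Finset ι) (t : E) (m : Multiset (ι → ℝ)) :
    P.mixedVol c J ((fun v => u v t) ::ₘ m) = c t * P.mixedVol c J m := by
  simp only [mixedVol, Finset.mul_sum]
  refine Finset.sum_congr rfl fun I hI => ?_
  rw [Multiset.map_cons, Multiset.prod_cons,
    (P.isCoordSystem I (Finset.mem_filter.mp hI).1).solve_eval t]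
  ring

lemma mixedVol_eq_zero_of_not_isFace (hJ : ¬ P.IsFace J) : P.mixedVol c J m = 0 := by
  rw [mixedVol, Finset.filter_false_of_mem fun I hI hJI => hJ ⟨I, hI, hJI⟩, Finset.sum_empty]

lemma mixedVol_zero_of_card_eq (hJ : J.card = Module.finrank ℝ E) :
    P.mixedVol c J 0 = if J ∈ P.vertices then P.weight J else 0 := by
  have heq : ∀ A ∈ P.vertices, J ⊆ A → J = A := fun A hA hJA =>
    Finset.eq_of_subset_of_card_le hJA (by rw [hJ, (P.isCoordSystem A hA).card_eq_finrank])
  split_ifs with h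
  · have hfilter : P.vertices.filter (J ⊆ ·) = {J} :=
      Finset.eq_singleton_iff_unique_mem.mpr ⟨by simp [h], fun A hA =>
        (heq A (Finset.mem_filter.mp hA).1 (Finset.mem_filter.mp hA).2).symm⟩
    simp [mixedVol, hfilter]
  · exact mixedVol_eq_zero_of_not_isFace fun ⟨A, hA, hJA⟩ => h (heq A hA hJA ▸ hA)

section Recursion

lemma prod_map_solve_div_eq_sum (hc : P.IsGeneric c) (hI : I ∈ P.vertices)
    (hf : ∀ j ∈ J, f j = 0) :
    P.weight I * ((f ::ₘ m).map fun f => c (solve u I f)).prod / ∏ k ∈ I \ J, slope u c I k =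
      ∑ v ∈ I \ J, f v * (P.weight I * (m.map fun f => c (solve u I f)).prod /
        ∏ k ∈ I \ insert v J, slope u c I k) := by
  have hsum : ∑ i ∈ I \ J, f i * slope u c I i = c (solve u I f) := by
    rw [(P.isCoordSystem I hI).map_solve_eq_sum]
    refine Finset.sum_subset Finset.sdiff_subset fun i hi hi' => ?_
    rw [hf i (by simpa [hi] using hi'), zero_mul]
  rw [Multiset.map_cons, Multiset.prod_cons, ← hsum, Finset.sum_mul, Finset.mul_sum,
    Finset.sum_div]
  refine Finset.sum_congr rfl fun i hi => ?_
  rw [← Finset.mul_prod_erase _ _ hi, ← Finset.sdiff_insert]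
  have hslope := hc I hI i (Finset.mem_sdiff.mp hi).1
  field_simp

variable [Fintype ι]

lemma mixedVol_cons_of_forall_eq_zero (hc : P.IsGeneric c) (hf : ∀ j ∈ J, f j = 0)
    (m : Multiset (ι → ℝ)) :
    P.mixedVol c J (f ::ₘ m) = ∑ v ∈ Jᶜ, f v * P.mixedVol c (insert v J) m := by
  simp only [mixedVol, Finset.mul_sum]
  rw [Finset.sum_congr rfl fun I hI =>
    prod_map_solve_div_eq_sum hc (Finset.mem_filter.mp hI).1 hf]
  refine Finset.sum_comm' fun I v => ?_
  simp only [Finset.mem_filter, Finset.mem_sdiff, Finset.mem_compl, Finset.insert_subset_iff]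
  tauto

lemma mixedVol_cons_eq_sum_add (hc : P.IsGeneric c) (t : E) (hf : ∀ j ∈ J, f j = u j t)
    (m : Multiset (ι → ℝ)) :
    P.mixedVol c J (f ::ₘ m) =
      ∑ v ∈ Jᶜ, (f v - u v t) * P.mixedVol c (insert v J) m + c t * P.mixedVol c J m := by
  rw [← P.mixedVol_cons_eval, ← sub_eq_iff_eq_add]
  refine ((P.mixedVolLinear c J m).map_sub f _).symm.trans ?_
  exact mixedVol_cons_of_forall_eq_zero hc (fun j hj => sub_eq_zero.mpr (hf j hj)) m

lemma slope_mul_mixedVol (hc : P.IsGeneric c) (hI : I ∈ P.vertices) (hJ : J ⊆ I) {i : ι}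
    (hi : i ∉ J) (m : Multiset (ι → ℝ)) :
    slope u c I i * P.mixedVol c J m =
      ∑ v ∈ Jᶜ, u v (edgeDir u I i) * P.mixedVol c (insert v J) m := by
  rw [slope, ← mixedVol_cons_eval]
  refine mixedVol_cons_of_forall_eq_zero hc (fun j hj => ?_) m
  rw [(P.isCoordSystem I hI).apply_edgeDir (hJ hj), if_neg (ne_of_mem_of_not_mem hj hi)]

end Recursion

lemma mixedVol_edge (hc : P.IsGeneric c) (hJ : J.card + 1 = Module.finrank ℝ E) :
    P.mixedVol c J 0 = 0 := by
  by_cases h : P.IsFace J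
  swap
  · exact mixedVol_eq_zero_of_not_isFace h
  obtain ⟨I, hI, hJI⟩ := h
  have hcoord := P.isCoordSystem I hI
  obtain ⟨i, hi, rfl⟩ := Finset.exists_eq_insert_iff.mpr
    ⟨hJI, hJ.trans hcoord.card_eq_finrank.symm⟩
  obtain ⟨k, hk, hI', hd⟩ := P.exists_exchange _ hI i (Finset.mem_insert_self i J)
  have hfilter : P.vertices.filter (J ⊆ ·) = {insert i J, insert k J} := by
    ext A
    simp only [Finset.mem_filter, Finset.mem_insert, Finset.mem_singleton]
    rw [Finset.erase_insert hi] at hI'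
    constructor
    · rintro ⟨hA, hJA⟩
      have := eq_or_eq_of_erase_subset hI (Finset.mem_insert_self i J) hk
        (by rwa [Finset.erase_insert hi]) hA (by rwa [Finset.erase_insert hi])
      rwa [Finset.erase_insert hi] at this
    · rintro (rfl | rfl)
      · exact ⟨hI, hJI⟩
      · exact ⟨hI', Finset.subset_insert _ _⟩
  have hne : insert i J ≠ insert k J := fun h => hk (h ▸ Finset.mem_insert_self k J)
  have hslope' := hcoord.slope_exchange hk (P.isCoordSystem _ hI') hd.ne c
  have hweight := P.weight_exchange _ hI i (Finset.mem_insert_self i J) k hk hI'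
  have hslope := hc _ hI i (Finset.mem_insert_self i J)
  rw [Finset.erase_insert hi] at hslope' hweight
  have hkJ : k ∉ J := fun h => hk (Finset.mem_insert_of_mem h)
  rw [mixedVol, hfilter, Finset.sum_pair hne, Finset.insert_sdiff_cancel hi,
    Finset.insert_sdiff_cancel hkJ, Finset.prod_singleton, Finset.prod_singleton, hslope',
    ← hweight, abs_of_neg hd]
  have := hd.ne
  simp only [Multiset.map_zero, Multiset.prod_zero]
  field_simp
  ring

section TopDegree

lemma mixedVol_eq_zero_of_card_lt [Finite ι] (hc : P.IsGeneric c) (J : Finset ι)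
    (m : Multiset (ι → ℝ)) (h : J.card + m.card < Module.finrank ℝ E) : P.mixedVol c J m = 0 := by
  cases nonempty_fintype ι
  induction hd : Module.finrank ℝ E - J.card generalizing J m with
  | zero => omega
  | succ d ih =>
  by_cases hJ : P.IsFace J
  swap
  · exact mixedVol_eq_zero_of_not_isFace hJ
  obtain ⟨I, hI, hJI⟩ := hJ
  have hinsert : ∀ v ∈ Jᶜ, ∀ m : Multiset (ι → ℝ), J.card + m.card + 1 < Module.finrank ℝ E →
      P.mixedVol c (insert v J) m = 0 := fun v hv m hm => by
    have hcard := Finset.card_insert_of_notMem (Finset.mem_compl.mp hv)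
    exact ih _ m (by omega) (by omega)
  have hlower : ∀ m : Multiset (ι → ℝ), J.card + m.card + 1 < Module.finrank ℝ E →
      P.mixedVol c J m = 0 := fun m hm => by
    obtain ⟨i, hi, hiJ⟩ : ∃ i ∈ I, i ∉ J := Finset.exists_mem_notMem_of_card_lt_card
      (by rw [(P.isCoordSystem I hI).card_eq_finrank]; omega)
    refine (mul_eq_zero.mp ?_).resolve_left (hc I hI i hi)
    rw [slope_mul_mixedVol hc hI hJI hiJ]
    exact Finset.sum_eq_zero fun v hv => by rw [hinsert v hv m hm, mul_zero]
  rcases Nat.lt_or_eq_of_le (Nat.succ_le_of_lt h) with h | h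
  · exact hlower m h
  induction m using Multiset.induction with
  | empty => exact mixedVol_edge hc h
  | cons f m =>
    rw [Multiset.card_cons] at h
    rw [mixedVol_cons_eq_sum_add hc (solve u I f)
      (fun j hj => ((P.isCoordSystem I hI).apply_solve f (hJI hj)).symm), hlower m (by omega),
      mul_zero, add_zero]
    exact Finset.sum_eq_zero fun v hv => by rw [hinsert v hv m (by omega), mul_zero]

lemma mixedVol_cons_sub_eval [Finite ι] (hc : P.IsGeneric c)
    (h : J.card + m.card < Module.finrank ℝ E) (f : ι → ℝ) (t : E) :
    P.mixedVol c J ((fun v => f v - u v t) ::ₘ m) = P.mixedVol c J (f ::ₘ m) := by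
  refine ((P.mixedVolLinear c J m).map_sub f fun v => u v t).trans (sub_eq_self.mpr ?_)
  refine (P.mixedVol_cons_eval c J t m).trans ?_
  rw [mixedVol_eq_zero_of_card_lt hc J m h, mul_zero]

lemma mixedVol_cons_eq_sum [Fintype ι] (hc : P.IsGeneric c)
    (h : J.card + m.card + 1 = Module.finrank ℝ E) (t : E) (hf : ∀ j ∈ J, f j = u j t) :
    P.mixedVol c J (f ::ₘ m) = ∑ v ∈ Jᶜ, (f v - u v t) * P.mixedVol c (insert v J) m := by
  rw [← mixedVol_cons_sub_eval hc (by omega) f t]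
  exact mixedVol_cons_of_forall_eq_zero hc (fun j hj => sub_eq_zero.mpr (hf j hj)) m

lemma mixedVol_cons_eq_sum_of_subset [Fintype ι] (hc : P.IsGeneric c)
    (h : J.card + m.card + 1 = Module.finrank ℝ E) (hI : I ∈ P.vertices) (hJ : J ⊆ I)
    (f : ι → ℝ) : P.mixedVol c J (f ::ₘ m) =
      ∑ v ∈ Jᶜ, (f v - u v (solve u I f)) * P.mixedVol c (insert v J) m :=
  mixedVol_cons_eq_sum hc h _ fun _ hj => ((P.isCoordSystem I hI).apply_solve f (hJ hj)).symm

lemma mixedVol_nonneg [Finite ι] (hc : P.IsGeneric c) (hm : ∀ f ∈ m, P.IsNef f)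
    (h : J.card + m.card = Module.finrank ℝ E) : 0 ≤ P.mixedVol c J m := by
  cases nonempty_fintype ι
  induction m using Multiset.induction generalizing J with
  | empty =>
    rw [mixedVol_zero_of_card_eq (by simpa using h)]
    split_ifs with hJ
    · exact (P.weight_pos J hJ).le
    · exact le_rfl
  | cons f m ih =>
    rw [Multiset.card_cons] at h
    rw [Multiset.forall_mem_cons] at hm
    by_cases hJ : P.IsFace J
    swap
    · exact (mixedVol_eq_zero_of_not_isFace hJ).ge
    obtain ⟨I, hI, hJI⟩ := hJ
    rw [mixedVol_cons_eq_sum_of_subset hc (by omega) hI hJI]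
    refine Finset.sum_nonneg fun v hv => mul_nonneg (sub_nonneg.mpr (hm.1 I hI v)) (ih hm.2 ?_)
    rw [Finset.card_insert_of_notMem (Finset.mem_compl.mp hv)]
    omega

lemma mixedVol_pos [Finite ι] (hc : P.IsGeneric c) (hm : ∀ f ∈ m, P.IsAmple f) (hJ : P.IsFace J)
    (h : J.card + m.card = Module.finrank ℝ E) : 0 < P.mixedVol c J m := by
  cases nonempty_fintype ι
  induction m using Multiset.induction generalizing J with
  | empty =>
    obtain ⟨I, hI, hJI⟩ := hJ
    rw [Multiset.card_zero, add_zero] at h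
    rw [mixedVol_zero_of_card_eq h, Finset.eq_of_subset_of_card_le hJI
      (by rw [h, (P.isCoordSystem I hI).card_eq_finrank]), if_pos hI]
    exact P.weight_pos I hI
  | cons f m ih =>
    rw [Multiset.card_cons] at h
    rw [Multiset.forall_mem_cons] at hm
    obtain ⟨I, hI, hJI⟩ := hJ
    obtain ⟨i, hi, hiJ⟩ : ∃ i ∈ I, i ∉ J := Finset.exists_mem_notMem_of_card_lt_card
      (by rw [(P.isCoordSystem I hI).card_eq_finrank]; omega)
    obtain ⟨k, hk, hI', -⟩ := P.exists_exchange I hI i hi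
    have hcard : ∀ v ∈ Jᶜ, (insert v J).card + m.card = Module.finrank ℝ E := fun v hv => by
      rw [Finset.card_insert_of_notMem (Finset.mem_compl.mp hv)]
      omega
    have hkJ : k ∈ Jᶜ := Finset.mem_compl.mpr fun hkJ => hk (hJI hkJ)
    rw [mixedVol_cons_eq_sum_of_subset hc (by omega) hI hJI]
    refine Finset.sum_pos' (fun v hv => mul_nonneg (sub_nonneg.mpr (hm.1.isNef I hI v))
      (mixedVol_nonneg hc (fun f hf => (hm.2 f hf).isNef) (hcard v hv)))
      ⟨k, hkJ, mul_pos (sub_pos.mpr (hm.1 I hI k hk)) (ih hm.2 ?_ (hcard k hkJ))⟩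
    exact ⟨_, hI', Finset.insert_subset (Finset.mem_insert_self _ _) (subset_exchange hJI hiJ k)⟩

lemma mixedVol_cons_le_of_le [Finite ι] (hc : P.IsGeneric c) (hm : ∀ f ∈ m, P.IsNef f)
    (hcard : m.card + 1 = Module.finrank ℝ E) (hfg : f ≤ g) :
    P.mixedVol c ∅ (f ::ₘ m) ≤ P.mixedVol c ∅ (g ::ₘ m) := by
  cases nonempty_fintype ι
  rw [mixedVol_cons_of_forall_eq_zero hc (by simp), mixedVol_cons_of_forall_eq_zero hc (by simp)]
  refine Finset.sum_le_sum fun v _ => mul_le_mul_of_nonneg_right (hfg v) ?_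
  exact mixedVol_nonneg hc hm (by simpa [add_comm] using hcard)

end TopDegree

lemma mixedVol_empty (m : Multiset (ι → ℝ)) : P.mixedVol c ∅ m = ∑ I ∈ P.vertices,
    P.weight I / (∏ i ∈ I, slope u c I i) * (m.map fun f => c (solve u I f)).prod := by
  simp only [mixedVol, Finset.empty_subset, Finset.filter_true, Finset.sdiff_empty]
  exact Finset.sum_congr rfl fun I _ => mul_div_right_comm _ _ _

lemma mixedVol_replicate (k : ℕ) : P.mixedVol c ∅ (Multiset.replicate k h) =
    ∑ I ∈ P.vertices, P.weight I / (∏ i ∈ I, slope u c I i) * c (solve u I h) ^ k := by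
  simp only [mixedVol_empty, Multiset.map_replicate, Multiset.prod_replicate]

end SimplePolytope

/-! ### Symmetric matrices with one positive eigenvalue -/

open scoped InnerProductSpace in
lemma inner_map_self_nonpos_of_forall_fixed_inner_eq_zero {V : Type*} [NormedAddCommGroup V]
    [InnerProductSpace ℝ V] [FiniteDimensional ℝ V] {T : V →ₗ[ℝ] V} (hT : T.IsSymmetric)
    (hle : ∀ x, ⟪T x, x⟫_ℝ ≤ ‖x‖ ^ 2) (hsq : ∀ x, ⟪T x, x⟫_ℝ ≤ ‖T x‖ ^ 2) {x : V}
    (hx : ∀ y, T y = y → ⟪y, x⟫_ℝ = 0) : ⟪T x, x⟫_ℝ ≤ 0 := by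
  set e := hT.eigenvectorBasis rfl
  set ev := hT.eigenvalues rfl
  have heig : ∀ i, T (e i) = ev i • e i := hT.apply_eigenvectorBasis rfl
  have hinner : ∀ i, ⟪T (e i), e i⟫_ℝ = ev i := fun i => by
    rw [heig, real_inner_smul_left, real_inner_self_eq_norm_sq, e.norm_eq_one, one_pow, mul_one]
  rw [← e.sum_inner_mul_inner]
  refine Finset.sum_nonpos fun i _ => ?_
  have hle_one : ev i ≤ 1 := by simpa [hinner, e.norm_eq_one] using hle (e i)
  have hle_sq : ev i ≤ ev i ^ 2 := by
    have h := hsq (e i)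
    rwa [hinner, heig, norm_smul, e.norm_eq_one, mul_one, Real.norm_eq_abs, sq_abs] at h
  have hmul : ⟪T x, e i⟫_ℝ * ⟪e i, x⟫_ℝ = ev i * ⟪e i, x⟫_ℝ ^ 2 := by
    rw [hT x (e i), heig, real_inner_smul_right, real_inner_comm]
    ring
  rw [hmul]
  rcases hle_one.lt_or_eq with hlt | heq
  · exact mul_nonpos_of_nonpos_of_nonneg (by nlinarith) (sq_nonneg _)
  · rw [hx (e i) (by rw [heig, heq, one_smul]), zero_pow two_ne_zero, mul_zero]

section Laplacian

open Matrix

variable {α : Type*} [Fintype α] {C : Matrix α α ℝ} {d : α → ℝ}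

lemma two_mul_sum_sub_dotProduct_mulVec (hC : C.IsSymm) (hd : C *ᵥ 1 = d) (r : α → ℝ) :
    2 * (∑ v, d v * r v ^ 2 - r ⬝ᵥ C *ᵥ r) = ∑ v, ∑ w, C v w * (r v - r w) ^ 2 := by
  have hrow : ∑ v, ∑ w, C v w * r v ^ 2 = ∑ v, d v * r v ^ 2 := by
    simp [← hd, mulVec, dotProduct, Finset.sum_mul]
  have hcol : ∑ v, ∑ w, C v w * r w ^ 2 = ∑ v, d v * r v ^ 2 := by
    rw [← hrow, Finset.sum_comm]
    simp only [hC.apply]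
  have hmixed : ∑ v, ∑ w, C v w * (r v * r w) = r ⬝ᵥ C *ᵥ r := by
    simp only [mulVec, dotProduct, Finset.mul_sum]
    exact Finset.sum_congr rfl fun v _ => Finset.sum_congr rfl fun w _ => by ring
  have hexpand : ∀ v w, C v w * (r v - r w) ^ 2 =
      C v w * r v ^ 2 + C v w * r w ^ 2 - 2 * (C v w * (r v * r w)) := fun v w => by ring
  simp only [hexpand, Finset.sum_sub_distrib, Finset.sum_add_distrib, ← Finset.mul_sum, hrow, hcol,
    hmixed]
  ring

omit [Fintype α] in
lemma mul_sub_sq_nonneg (hoff : ∀ v w, v ≠ w → 0 ≤ C v w) (r : α → ℝ) (v w : α) :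
    0 ≤ C v w * (r v - r w) ^ 2 := by
  rcases eq_or_ne v w with rfl | h
  · simp
  · exact mul_nonneg (hoff v w h) (sq_nonneg _)

lemma dotProduct_mulVec_le_sum (hC : C.IsSymm) (hoff : ∀ v w, v ≠ w → 0 ≤ C v w)
    (hd : C *ᵥ 1 = d) (r : α → ℝ) : r ⬝ᵥ C *ᵥ r ≤ ∑ v, d v * r v ^ 2 := by
  have hnonneg := Finset.sum_nonneg fun v (_ : v ∈ Finset.univ) =>
    Finset.sum_nonneg fun w (_ : w ∈ Finset.univ) => mul_sub_sq_nonneg hoff r v w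
  rw [← two_mul_sum_sub_dotProduct_mulVec hC hd] at hnonneg
  linarith

lemma eq_of_mulVec_eq_mul (hC : C.IsSymm) (hoff : ∀ v w, v ≠ w → 0 ≤ C v w) (hd : C *ᵥ 1 = d)
    {r : α → ℝ} (hr : C *ᵥ r = d * r) {v w : α} (hvw : 0 < C v w) : r v = r w := by
  have hsum : ∑ v, ∑ w, C v w * (r v - r w) ^ 2 = 0 := by
    rw [← two_mul_sum_sub_dotProduct_mulVec hC hd, hr]
    simp [dotProduct, sq, mul_left_comm]
  rw [Finset.sum_eq_zero_iff_of_nonneg fun v _ =>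
    Finset.sum_nonneg fun w _ => mul_sub_sq_nonneg hoff r v w] at hsum
  have hterm := (Finset.sum_eq_zero_iff_of_nonneg fun w _ => mul_sub_sq_nonneg hoff r v w).mp
    (hsum v (Finset.mem_univ v)) w (Finset.mem_univ w)
  simpa [hvw.ne', sub_eq_zero] using hterm

lemma dotProduct_mulVec_nonpos_of_forall_fixed_dotProduct_eq_zero {M : Matrix α α ℝ}
    (hM : M.IsSymm) (hle : ∀ x, x ⬝ᵥ M *ᵥ x ≤ x ⬝ᵥ x)
    (hsq : ∀ x, x ⬝ᵥ M *ᵥ x ≤ M *ᵥ x ⬝ᵥ M *ᵥ x) {x : α → ℝ}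
    (hx : ∀ y, M *ᵥ y = y → y ⬝ᵥ x = 0) : x ⬝ᵥ M *ᵥ x ≤ 0 := by
  classical
  have hinner : ∀ y z : EuclideanSpace ℝ α, inner ℝ y z = z.ofLp ⬝ᵥ y.ofLp := fun y z => by
    simp [EuclideanSpace.inner_eq_star_dotProduct]
  have hT : M.toEuclideanLin.IsSymmetric :=
    isSymmetric_toEuclideanLin_iff.mpr
      (by rwa [IsHermitian, conjTranspose_eq_transpose_of_trivial])
  have key := inner_map_self_nonpos_of_forall_fixed_inner_eq_zero hT (x := WithLp.toLp 2 x)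
    (fun y => ?_) (fun y => ?_) (fun y hy => ?_)
  · simpa [hinner] using key
  · rw [← real_inner_self_eq_norm_sq, hinner, hinner]
    exact hle y.ofLp
  · rw [← real_inner_self_eq_norm_sq, hinner, hinner]
    exact hsq y.ofLp
  · simpa [hinner, dotProduct_comm] using hx y.ofLp (congrArg WithLp.ofLp hy)

lemma dotProduct_eq_zero_of_mulVec_eq_mul (hC : C.IsSymm) (hoff : ∀ v w, v ≠ w → 0 ≤ C v w)
    (hd : C *ᵥ 1 = d)
    (hconn : ∀ r : α → ℝ, (∀ v w, v ≠ w → 0 < C v w → r v = r w) →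
      ∀ v w, d v ≠ 0 → d w ≠ 0 → r v = r w)
    {r r' : α → ℝ} (hr : d ⬝ᵥ r = 0) (hr' : C *ᵥ r' = d * r') : (d * r') ⬝ᵥ r = 0 := by
  have hconst := hconn r' fun v w _ hvw => eq_of_mulVec_eq_mul hC hoff hd hr' hvw
  by_cases hzero : ∃ w, d w ≠ 0
  · obtain ⟨w, hw⟩ := hzero
    have hdr : d * r' = r' w • d := by
      ext v
      by_cases hv : d v = 0
      · simp [hv]
      · simp [hconst v w hv hw, mul_comm]
    rw [hdr, smul_dotProduct, hr, smul_zero]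
  · push Not at hzero
    simp [dotProduct, hzero]

lemma diagonal_mul_mul_diagonal_mulVec [DecidableEq α] (s x : α → ℝ) :
    (diagonal s * C * diagonal s) *ᵥ x = s * C *ᵥ (s * x) := by
  rw [← mulVec_mulVec, ← mulVec_mulVec]
  ext v
  rw [mulVec_diagonal, funext (mulVec_diagonal s x)]
  rfl

lemma inv_mul_mul_dotProduct_mulVec (hC : C.IsSymm) {s : α → ℝ}
    (hs : ∀ v, s v = 0 → ∀ w, C v w = 0) (r : α → ℝ) :
    (s⁻¹ * (s * r)) ⬝ᵥ C *ᵥ (s⁻¹ * (s * r)) = r ⬝ᵥ C *ᵥ r := by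
  simp only [dotProduct, mulVec, Finset.mul_sum, Pi.mul_apply, Pi.inv_apply]
  refine Finset.sum_congr rfl fun v _ => Finset.sum_congr rfl fun w _ => ?_
  by_cases hv : s v = 0
  · simp [hs v hv]
  by_cases hw : s w = 0
  · simp [← hC.apply v w, hs w hw]
  · rw [inv_mul_cancel_left₀ hv, inv_mul_cancel_left₀ hw]

lemma mulVec_inv_mul_eq_sq_mul {s y : α → ℝ} (hs : ∀ v, s v = 0 → ∀ w, C v w = 0)
    (hy : s⁻¹ * C *ᵥ (s⁻¹ * y) = y) : C *ᵥ (s⁻¹ * y) = s ^ 2 * (s⁻¹ * y) := by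
  ext v
  by_cases hv : s v = 0
  · simp [hv, mulVec, dotProduct, hs v hv]
  · have hyv := congrFun hy v
    simp only [Pi.mul_apply, Pi.inv_apply, Pi.pow_apply] at hyv ⊢
    field_simp at hyv ⊢
    exact hyv

-- The matrix `D ^ (-1/2) * C * D ^ (-1/2)` is at most one since the Laplacian `D - C` is
-- nonnegative, and `hsq` then leaves `1` as its only positive eigenvalue.
theorem dotProduct_mulVec_nonpos (hC : C.IsSymm) (hoff : ∀ v w, v ≠ w → 0 ≤ C v w)
    (hd : C *ᵥ 1 = d) (hd_nonneg : 0 ≤ d) (hrow : ∀ v, d v = 0 → ∀ w, C v w = 0)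
    (hconn : ∀ r : α → ℝ, (∀ v w, v ≠ w → 0 < C v w → r v = r w) →
      ∀ v w, d v ≠ 0 → d w ≠ 0 → r v = r w)
    (hsq : ∀ r, r ⬝ᵥ C *ᵥ r ≤ ∑ v, (C *ᵥ r) v ^ 2 / d v)
    {r : α → ℝ} (hr : d ⬝ᵥ r = 0) : r ⬝ᵥ C *ᵥ r ≤ 0 := by
  classical
  set s : α → ℝ := fun v => √(d v)
  have hs : ∀ v, s v ^ 2 = d v := fun v => Real.sq_sqrt (hd_nonneg v)
  have hC_zero : ∀ v, s v = 0 → ∀ w, C v w = 0 := fun v h =>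
    hrow v (by rw [← hs, h, zero_pow two_ne_zero])
  set M := diagonal s⁻¹ * C * diagonal s⁻¹
  have hM : ∀ x, M *ᵥ x = s⁻¹ * C *ᵥ (s⁻¹ * x) := diagonal_mul_mul_diagonal_mulVec s⁻¹
  have hform : ∀ x, x ⬝ᵥ M *ᵥ x = (s⁻¹ * x) ⬝ᵥ C *ᵥ (s⁻¹ * x) := fun x => by
    simp only [hM, dotProduct, Pi.mul_apply]
    exact Finset.sum_congr rfl fun v _ => by ring
  rw [← inv_mul_mul_dotProduct_mulVec hC hC_zero, ← hform]
  refine dotProduct_mulVec_nonpos_of_forall_fixed_dotProduct_eq_zero ?_ (fun x => ?_)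
    (fun x => ?_) (fun y hy => ?_)
  · simp [M, IsSymm, transpose_mul, hC.eq, Matrix.mul_assoc]
  · rw [hform]
    refine (dotProduct_mulVec_le_sum hC hoff hd _).trans (Finset.sum_le_sum fun v _ => ?_)
    rw [← hs, ← mul_pow, ← sq]
    by_cases hv : s v = 0
    · simp [hv, sq_nonneg]
    · simp [mul_inv_cancel_left₀ hv]
  · rw [hform, hM]
    refine (hsq _).trans_eq (Finset.sum_congr rfl fun v _ => ?_)
    simp only [Pi.mul_apply, Pi.inv_apply, ← hs]
    ring
  · have hfix : C *ᵥ (s⁻¹ * y) = s ^ 2 * (s⁻¹ * y) :=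
      mulVec_inv_mul_eq_sq_mul hC_zero ((hM y).symm.trans hy)
    rw [show s ^ 2 = d from funext hs] at hfix
    rw [← dotProduct_eq_zero_of_mulVec_eq_mul hC hoff hd hconn hr hfix]
    refine Finset.sum_congr rfl fun v _ => ?_
    simp only [Pi.mul_apply, Pi.inv_apply, ← hs]
    by_cases hv : s v = 0
    · simp [hv]
    · field_simp

end Laplacian

/-! ### The Alexandrov–Fenchel inequality for simple polytopes -/

/-- The bilinear form `B` has at most one positive eigenvalue, phrased as nonpositivity on a
subspace of codimension at most one. -/
def IsHyperbolic {V : Type*} [AddCommGroup V] [Module ℝ V] (B : LinearMap.BilinForm ℝ V) : Prop :=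
  ∃ φ : Module.Dual ℝ V, ∀ x, φ x = 0 → B x x ≤ 0

lemma IsHyperbolic.mul_le_sq {V : Type*} [AddCommGroup V] [Module ℝ V]
    {B : LinearMap.BilinForm ℝ V} (hB : IsHyperbolic B) (hsymm : B.IsSymm) (x : V) {y : V}
    (hy : 0 < B y y) : B x x * B y y ≤ B x y ^ 2 := by
  obtain ⟨φ, hφ⟩ := hB
  have hφy : φ y ≠ 0 := fun h => (hφ y h).not_gt hy
  set s := φ x / φ y
  have hxy : B (x - s • y) (x - s • y) ≤ 0 := hφ _ (by simp [s, hφy])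
  have hexpand : B (x - s • y) (x - s • y) = B x x - 2 * s * B x y + s ^ 2 * B y y := by
    simp only [map_sub, map_smul, LinearMap.sub_apply, LinearMap.smul_apply, smul_eq_mul,
      hsymm.eq y x]
    ring
  nlinarith [sq_nonneg (B x y - s * B y y)]

namespace SimplePolytope

variable {ι E : Type*} [DecidableEq ι] [AddCommGroup E] [Module ℝ E]
  {u : ι → Module.Dual ℝ E} {P : SimplePolytope u} {c : Module.Dual ℝ E} {I J : Finset ι}
  {m : Multiset (ι → ℝ)} {f g h : ι → ℝ}

variable (P) in
/-- The bilinear form `(f, g) ↦ P.mixedVol c J (f ::ₘ g ::ₘ m)`. -/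
noncomputable def mixedVolBilin (c : Module.Dual ℝ E) (J : Finset ι) (m : Multiset (ι → ℝ)) :
    LinearMap.BilinForm ℝ (ι → ℝ) :=
  LinearMap.mk₂ ℝ (fun f g => P.mixedVol c J (f ::ₘ g ::ₘ m))
    (fun f f' g => P.mixedVol_cons_add c J f f' (g ::ₘ m))
    (fun r f g => P.mixedVol_cons_smul c J r f (g ::ₘ m))
    (fun f g g' => by simp only [Multiset.cons_swap f, P.mixedVol_cons_add])
    (fun r f g => by simp only [Multiset.cons_swap f, P.mixedVol_cons_smul, smul_eq_mul])

lemma mixedVolBilin_apply (f g : ι → ℝ) :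
    P.mixedVolBilin c J m f g = P.mixedVol c J (f ::ₘ g ::ₘ m) := rfl

lemma mixedVolBilin_isSymm : (P.mixedVolBilin c J m).IsSymm :=
  ⟨fun f g => by simp [mixedVolBilin_apply, Multiset.cons_swap f g]⟩

section Surface

lemma exists_sdiff_eq_pair (hI : I ∈ P.vertices) (hJI : J ⊆ I)
    (hcard : J.card + 2 = Module.finrank ℝ E) : ∃ a b, a ≠ b ∧ I \ J = {a, b} := by
  refine Finset.card_eq_two.mp ?_
  rw [Finset.card_sdiff_of_subset hJI, (P.isCoordSystem I hI).card_eq_finrank]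
  omega

-- The terms of the defining sum with a positive denominator come from the maximum and the minimum
-- of `c` on the polygon `J`; after a translation they vanish if `f` agrees at these two vertices.
lemma isHyperbolic_mixedVolBilin_zero [Finite ι] (hc : P.IsGeneric c) (hJ : P.IsFace J)
    (hcard : J.card + 2 = Module.finrank ℝ E) : IsHyperbolic (P.mixedVolBilin c J 0) := by
  obtain ⟨A, hA, hJA, hApos⟩ := hJ.exists_slope_pos hc
  obtain ⟨B, hB, hJB, hBneg⟩ := hJ.exists_slope_pos hc.neg
  refine ⟨c ∘ₗ solve u A - c ∘ₗ solve u B, fun f hf => ?_⟩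
  replace hf : c (solve u A f) = c (solve u B f) := sub_eq_zero.mp hf
  rw [mixedVolBilin_apply, ← mixedVol_cons_sub_eval hc (by simp; omega) f (solve u A f),
    Multiset.cons_swap, ← mixedVol_cons_sub_eval hc (by simp; omega) f (solve u A f)]
  refine Finset.sum_nonpos fun I hI => ?_
  obtain ⟨hI, hJI⟩ := Finset.mem_filter.mp hI
  obtain ⟨a, b, hab, hIJ⟩ := exists_sdiff_eq_pair hI hJI hcard
  have htranslate : c (solve u I fun v => f v - u v (solve u A f)) =
      c (solve u I f) - c (solve u A f) := by
    have := map_sub (solve u I) f fun v => u v (solve u A f)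
    rw [(P.isCoordSystem I hI).solve_eval] at this
    exact (congrArg c this).trans (map_sub c _ _)
  simp only [hIJ, Finset.prod_pair hab, Multiset.map_cons, Multiset.prod_cons, Multiset.map_zero,
    Multiset.prod_zero, mul_one, htranslate]
  by_cases hpos : 0 < slope u c I a * slope u c I b
  · suffices c (solve u I f) = c (solve u A f) by simp [this]
    rcases pos_and_pos_or_neg_and_neg_of_mul_pos hpos with hpos | hneg
    · rw [eq_of_slope_pos hI hA hJI hJA (by simpa [hIJ] using hpos) hApos]
    · rw [hf, eq_of_slope_pos (c := -c) hI hB hJI hJB (by simpa [hIJ, slope] using hneg) hBneg]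
  · exact div_nonpos_of_nonneg_of_nonpos
      (mul_nonneg (P.weight_pos I hI).le (mul_self_nonneg _)) (not_lt.mp hpos)

end Surface

section Step

open Matrix

variable (P) in
/-- The matrix of `P.mixedVolBilin c J m` in the coordinates rescaled by `κ`. -/
noncomputable def mixedVolMatrix (c : Module.Dual ℝ E) (J : Finset ι) (m : Multiset (ι → ℝ))
    (κ : ι → ℝ) : Matrix ι ι ℝ :=
  Matrix.of fun v w => P.mixedVol c J (Pi.single v (κ v) ::ₘ Pi.single w (κ w) ::ₘ m)

variable {κ : ι → ℝ}

lemma mixedVolMatrix_isSymm : (P.mixedVolMatrix c J m κ).IsSymm := by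
  ext v w
  simp only [Matrix.transpose_apply, mixedVolMatrix, Matrix.of_apply, Multiset.cons_swap]

lemma eq_of_forall_isFace_insert_insert (hc : P.IsGeneric c)
    (hcard : J.card + 3 ≤ Module.finrank ℝ E) {α : Type*} {r : ι → α}
    (hr : ∀ v ∉ J, ∀ w ∉ J, v ≠ w → P.IsFace (insert w (insert v J)) → r v = r w) {v w : ι}
    (hv : v ∉ J) (hvface : P.IsFace (insert v J)) (hw : w ∉ J) (hwface : P.IsFace (insert w J)) :
    r v = r w := by
  classical
  have hconst : ∀ I ∈ P.vertices, J ⊆ I → ∀ v ∈ I, v ∉ J → (I \ J).image r = {r v} :=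
    fun I hI hJI v hv hvJ => by
      refine Finset.eq_singleton_iff_unique_mem.mpr
        ⟨Finset.mem_image_of_mem r (Finset.mem_sdiff.mpr ⟨hv, hvJ⟩), fun x hx => ?_⟩
      obtain ⟨w, hw, rfl⟩ := Finset.mem_image.mp hx
      obtain ⟨hw, hwJ⟩ := Finset.mem_sdiff.mp hw
      rcases eq_or_ne w v with rfl | hwv
      · rfl
      · exact hr w hwJ v hvJ hwv ⟨I, hI, by simp [Finset.insert_subset_iff, *]⟩
  obtain ⟨A, hA, hvA⟩ := hvface
  obtain ⟨B, hB, hwB⟩ := hwface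
  rw [Finset.insert_subset_iff] at hvA hwB
  have himage := eq_of_forall_exchange_eq (J := J) hc (fun I => (I \ J).image r)
    (fun I hI hJI i _ hiJ k _ hI' => ?_) hA hB hvA.2 hwB.2
  · simpa [hconst A hA hvA.2 v hvA.1 hv, hconst B hB hwB.2 w hwB.1 hw] using himage
  obtain ⟨v, hv, hvJ⟩ : ∃ v ∈ I, v ∉ insert i J := Finset.exists_mem_notMem_of_card_lt_card (by
    rw [(P.isCoordSystem I hI).card_eq_finrank, Finset.card_insert_of_notMem hiJ]
    omega)
  rw [Finset.mem_insert, not_or] at hvJ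
  rw [hconst I hI hJI v hv hvJ.2, hconst _ hI' (subset_exchange hJI hiJ k) v
    (Finset.mem_insert_of_mem (Finset.mem_erase.mpr ⟨hvJ.1, hv⟩)) hvJ.2]

lemma IsAmple.exists_apply_eq_lt (hf : P.IsAmple f) (hJ : P.IsFace J) :
    ∃ t : E, (∀ j ∈ J, u j t = f j) ∧ ∀ j ∉ J, u j t < f j := by
  set W := P.vertices.filter (J ⊆ ·)
  have hWne : W.Nonempty := hJ.imp fun I hI => Finset.mem_filter.mpr hI
  have hcard : (W.card : ℝ) ≠ 0 := by exact_mod_cast hWne.card_pos.ne'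
  have hmean : ∀ j, f j - u j ((W.card : ℝ)⁻¹ • ∑ I ∈ W, solve u I f) =
      (W.card : ℝ)⁻¹ * ∑ I ∈ W, (f j - u j (solve u I f)) := fun j => by
    rw [Finset.sum_sub_distrib, map_smul, map_sum, Finset.sum_const, nsmul_eq_mul, smul_eq_mul]
    field_simp
  refine ⟨(W.card : ℝ)⁻¹ • ∑ I ∈ W, solve u I f, fun j hj => ?_, fun j hj => ?_⟩
  · rw [eq_comm, ← sub_eq_zero, hmean, Finset.sum_eq_zero fun I hI => ?_, mul_zero]
    obtain ⟨hI, hJI⟩ := Finset.mem_filter.mp hI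
    rw [(P.isCoordSystem I hI).apply_solve f (hJI hj), sub_self]
  · obtain ⟨I, hI, hJI, hjI⟩ : ∃ I ∈ P.vertices, J ⊆ I ∧ j ∉ I := by
      obtain ⟨I, hI, hJI⟩ := hJ
      by_cases hjI : j ∈ I
      · obtain ⟨k, hk, hI', -⟩ := P.exists_exchange I hI j hjI
        exact ⟨_, hI', subset_exchange hJI hj k,
          by simp [ne_of_mem_of_not_mem hjI hk]⟩
      · exact ⟨I, hI, hJI, hjI⟩
    rw [← sub_pos, hmean]
    refine mul_pos (by positivity) (Finset.sum_pos' (fun I hI => ?_)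
      ⟨I, Finset.mem_filter.mpr ⟨hI, hJI⟩, sub_pos.mpr (hf I hI j hjI)⟩)
    exact sub_nonneg.mpr (hf.isNef I (Finset.mem_filter.mp hI).1 j)

lemma mixedVol_cons_eq_sum_univ [Fintype ι] (hc : P.IsGeneric c) (hf : ∀ j ∈ J, f j = 0)
    (m : Multiset (ι → ℝ)) :
    P.mixedVol c J (f ::ₘ m) = ∑ v, f v * P.mixedVol c (insert v J) m := by
  rw [mixedVol_cons_of_forall_eq_zero hc hf]
  refine Finset.sum_subset (Finset.subset_univ _) fun v _ hv => ?_
  rw [hf v (by simpa using hv), zero_mul]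

lemma mixedVol_cons_single [Finite ι] (hc : P.IsGeneric c) {v : ι} {a : ℝ} (hv : v ∈ J → a = 0)
    (m : Multiset (ι → ℝ)) :
    P.mixedVol c J (Pi.single v a ::ₘ m) = a * P.mixedVol c (insert v J) m := by
  cases nonempty_fintype ι
  rw [mixedVol_cons_eq_sum_univ hc fun j hj => ?_,
    Finset.sum_eq_single v (fun w _ hw => by simp [hw]) (by simp), Pi.single_eq_same]
  rcases eq_or_ne j v with rfl | hjv
  · simpa using hv hj
  · simp [hjv]

lemma mixedVolMatrix_apply [Finite ι] (hc : P.IsGeneric c) (hκ : ∀ j ∈ J, κ j = 0) (v w : ι) :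
    P.mixedVolMatrix c J m κ v w =
      κ v * P.mixedVol c (insert v J) (Pi.single w (κ w) ::ₘ m) :=
  mixedVol_cons_single hc (hκ v) _

lemma mixedVolMatrix_apply_of_ne [Finite ι] (hc : P.IsGeneric c) (hκ : ∀ j ∈ J, κ j = 0) {v w : ι}
    (hvw : v ≠ w) : P.mixedVolMatrix c J m κ v w =
      κ v * (κ w * P.mixedVol c (insert w (insert v J)) m) := by
  rw [mixedVolMatrix_apply hc hκ, mixedVol_cons_single hc fun hw =>
    hκ w ((Finset.mem_insert.mp hw).resolve_left hvw.symm)]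

lemma mixedVolMatrix_mulVec [Fintype ι] (hc : P.IsGeneric c) (hκ : ∀ j ∈ J, κ j = 0) (r : ι → ℝ)
    (v : ι) : (P.mixedVolMatrix c J m κ *ᵥ r) v =
      κ v * P.mixedVol c (insert v J) ((κ * r) ::ₘ m) := by
  have hsum : κ * r = ∑ w, r w • Pi.single w (κ w) := by
    ext w
    simp [Finset.sum_apply, Pi.single_apply, mul_comm]
  have hexpand : P.mixedVol c (insert v J) ((κ * r) ::ₘ m) =
      ∑ w, r w * P.mixedVol c (insert v J) (Pi.single w (κ w) ::ₘ m) := by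
    rw [hsum]
    exact (map_sum (P.mixedVolLinear c (insert v J) m) _ _).trans
      (Finset.sum_congr rfl fun w _ => (P.mixedVolLinear c (insert v J) m).map_smul _ _)
  simp only [hexpand, mulVec, dotProduct, mixedVolMatrix_apply hc hκ, Finset.mul_sum]
  exact Finset.sum_congr rfl fun w _ => by ring

lemma dotProduct_mixedVolMatrix_mulVec [Fintype ι] (hc : P.IsGeneric c) (hκ : ∀ j ∈ J, κ j = 0)
    (r : ι → ℝ) : r ⬝ᵥ P.mixedVolMatrix c J m κ *ᵥ r =
      P.mixedVol c J ((κ * r) ::ₘ (κ * r) ::ₘ m) := by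
  rw [mixedVol_cons_eq_sum_univ hc fun j hj => by simp [hκ j hj]]
  exact Finset.sum_congr rfl fun v _ => by
    rw [mixedVolMatrix_mulVec hc hκ, Pi.mul_apply]
    ring

lemma eq_of_forall_mixedVolMatrix_pos [Finite ι] (hc : P.IsGeneric c) (hm : ∀ f ∈ m, P.IsAmple f)
    (hcard : J.card + m.card + 2 = Module.finrank ℝ E) (hm_ne : m ≠ 0)
    (hκ : ∀ j ∈ J, κ j = 0) (hκ_pos : ∀ j ∉ J, 0 < κ j) {r : ι → ℝ}
    (hr : ∀ v w, v ≠ w → 0 < P.mixedVolMatrix c J m κ v w → r v = r w) {v w : ι}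
    (hv : v ∉ J) (hvface : P.IsFace (insert v J)) (hw : w ∉ J) (hwface : P.IsFace (insert w J)) :
    r v = r w := by
  have hm_card := Multiset.card_pos.mpr hm_ne
  refine eq_of_forall_isFace_insert_insert hc (by omega) (fun v hv w hw hvw hface => ?_)
    hv hvface hw hwface
  refine hr v w hvw ?_
  rw [mixedVolMatrix_apply_of_ne hc hκ hvw]
  have hw' : w ∉ insert v J := by simp [hvw.symm, hw]
  refine mul_pos (hκ_pos v hv) (mul_pos (hκ_pos w hw) (mixedVol_pos hc hm hface ?_))
  rw [Finset.card_insert_of_notMem hw', Finset.card_insert_of_notMem hv]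
  omega

lemma IsAmple.dotProduct_mixedVolMatrix_mulVec_le [Fintype ι] (hc : P.IsGeneric c)
    (hf : P.IsAmple f) (hm : ∀ g ∈ m, P.IsAmple g)
    (hcard : J.card + m.card + 3 = Module.finrank ℝ E) {t : E} (hκ_eq : κ = fun v => f v - u v t)
    (hκ : ∀ j ∈ J, κ j = 0) (hκ_pos : ∀ j ∉ J, 0 < κ j)
    (hface : ∀ v ∉ J, P.IsFace (insert v J) → IsHyperbolic (P.mixedVolBilin c (insert v J) m))
    (r : ι → ℝ) : r ⬝ᵥ P.mixedVolMatrix c J (f ::ₘ m) κ *ᵥ r ≤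
      ∑ v, (P.mixedVolMatrix c J (f ::ₘ m) κ *ᵥ r) v ^ 2 /
        (κ v * P.mixedVol c (insert v J) (f ::ₘ f ::ₘ m)) := by
  have htranslate : P.mixedVol c J (κ ::ₘ (κ * r) ::ₘ (κ * r) ::ₘ m) =
      P.mixedVol c J (f ::ₘ (κ * r) ::ₘ (κ * r) ::ₘ m) := by
    nth_rw 1 [hκ_eq]
    exact mixedVol_cons_sub_eval hc (by simp; omega) f t
  rw [dotProduct_mixedVolMatrix_mulVec hc hκ, Multiset.cons_swap _ f, Multiset.cons_swap _ f,
    ← htranslate, mixedVol_cons_eq_sum_univ hc hκ]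
  refine Finset.sum_le_sum fun v _ => ?_
  rw [mixedVolMatrix_mulVec hc hκ]
  by_cases hv : v ∈ J
  · simp [hκ v hv]
  by_cases hvface : P.IsFace (insert v J)
  swap
  · simp [mixedVol_eq_zero_of_not_isFace hvface]
  have hpos : 0 < P.mixedVol c (insert v J) (f ::ₘ f ::ₘ m) :=
    mixedVol_pos hc (by simpa using ⟨hf, hm⟩) hvface
      (by simp [Finset.card_insert_of_notMem hv]; omega)
  have hAF := (hface v hv hvface).mul_le_sq mixedVolBilin_isSymm (κ * r) hpos
  rw [le_div_iff₀ (mul_pos (hκ_pos v hv) hpos)]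
  calc _ = κ v ^ 2 * (P.mixedVolBilin c (insert v J) m (κ * r) (κ * r) *
        P.mixedVolBilin c (insert v J) m f f) := by simp only [mixedVolBilin_apply]; ring
    _ ≤ κ v ^ 2 * P.mixedVolBilin c (insert v J) m (κ * r) f ^ 2 := by gcongr
    _ = _ := (mul_pow _ _ 2).symm

lemma mixedVolMatrix_nonneg_of_ne [Finite ι] (hc : P.IsGeneric c) (hm : ∀ f ∈ m, P.IsNef f)
    (hcard : J.card + m.card + 2 = Module.finrank ℝ E) (hκ : ∀ j ∈ J, κ j = 0)
    (hκ_pos : ∀ j ∉ J, 0 < κ j) {v w : ι} (hvw : v ≠ w) : 0 ≤ P.mixedVolMatrix c J m κ v w := by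
  rw [mixedVolMatrix_apply_of_ne hc hκ hvw]
  by_cases hv : v ∈ J
  · simp [hκ v hv]
  by_cases hw : w ∈ J
  · simp [hκ w hw]
  refine mul_nonneg (hκ_pos v hv).le (mul_nonneg (hκ_pos w hw).le (mixedVol_nonneg hc hm ?_))
  rw [Finset.card_insert_of_notMem (by simp [hvw.symm, hw]), Finset.card_insert_of_notMem hv]
  omega

lemma IsAmple.dotProduct_mixedVolMatrix_mulVec_nonpos [Fintype ι] (hc : P.IsGeneric c)
    (hf : P.IsAmple f) (hm : ∀ g ∈ m, P.IsAmple g)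
    (hcard : J.card + m.card + 3 = Module.finrank ℝ E) {t : E} (hκ_eq : κ = fun v => f v - u v t)
    (hκ : ∀ j ∈ J, κ j = 0) (hκ_pos : ∀ j ∉ J, 0 < κ j)
    (hface : ∀ v ∉ J, P.IsFace (insert v J) → IsHyperbolic (P.mixedVolBilin c (insert v J) m))
    {r : ι → ℝ} (hr : P.mixedVol c J ((κ * r) ::ₘ f ::ₘ f ::ₘ m) = 0) :
    r ⬝ᵥ P.mixedVolMatrix c J (f ::ₘ m) κ *ᵥ r ≤ 0 := by
  set d : ι → ℝ := fun v => κ v * P.mixedVol c (insert v J) (f ::ₘ f ::ₘ m)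
  have hfm : ∀ g ∈ f ::ₘ m, P.IsAmple g := by simpa using ⟨hf, hm⟩
  have hcard' : J.card + (f ::ₘ m).card + 2 = Module.finrank ℝ E := by simp; omega
  have hd_pos : ∀ v ∉ J, P.IsFace (insert v J) → 0 < d v := fun v hv hface =>
    mul_pos (hκ_pos v hv) (mixedVol_pos hc (by simpa using ⟨hf, hm⟩) hface
      (by simp [Finset.card_insert_of_notMem hv]; omega))
  have hd_zero : ∀ v, ¬ (v ∉ J ∧ P.IsFace (insert v J)) → κ v = 0 ∨ ¬ P.IsFace (insert v J) :=
    fun v hv => (not_and_or.mp hv).imp (fun h => hκ v (not_not.mp h)) id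
  have hd_ne : ∀ v, d v ≠ 0 → v ∉ J ∧ P.IsFace (insert v J) := fun v => not_imp_comm.mp fun hv =>
    (hd_zero v hv).elim (fun h => by simp [d, h])
      fun h => by simp [d, mixedVol_eq_zero_of_not_isFace h]
  refine dotProduct_mulVec_nonpos (d := d) mixedVolMatrix_isSymm
    (fun v w hvw => mixedVolMatrix_nonneg_of_ne hc (fun g hg => (hfm g hg).isNef) hcard' hκ hκ_pos
      hvw) (funext fun v => ?_) (fun v => ?_) (fun v hv w => ?_)
    (fun r hr v w hv hw => eq_of_forall_mixedVolMatrix_pos hc hfm hcard' (by simp) hκ hκ_pos hr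
      (hd_ne v hv).1 (hd_ne v hv).2 (hd_ne w hw).1 (hd_ne w hw).2)
    (hf.dotProduct_mixedVolMatrix_mulVec_le hc hm hcard hκ_eq hκ hκ_pos hface) ?_
  · rw [mixedVolMatrix_mulVec hc hκ, mul_one]
    nth_rw 2 [hκ_eq]
    have := Finset.card_insert_le v J
    rw [mixedVol_cons_sub_eval hc (by omega)]
  · by_contra hv
    exact hv (hd_pos v (hd_ne v fun h => hv h.ge).1 (hd_ne v fun h => hv h.ge).2).le
  · rw [mixedVolMatrix_apply hc hκ]
    rcases hd_zero v fun h => (hd_pos v h.1 h.2).ne' hv with h | h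
    · rw [h, zero_mul]
    · rw [mixedVol_eq_zero_of_not_isFace h, mul_zero]
  · rw [← hr, mixedVol_cons_eq_sum_univ hc fun j hj => by simp [hκ j hj]]
    exact Finset.sum_congr rfl fun v _ => by simp only [d, Pi.mul_apply]; ring

-- The substitution `g = κ * r` only reaches the `g` vanishing on `J`; by translation, these
-- suffice.
lemma IsAmple.isHyperbolic_mixedVolBilin_cons [Finite ι] (hc : P.IsGeneric c) (hf : P.IsAmple f)
    (hm : ∀ g ∈ m, P.IsAmple g) (hJ : P.IsFace J)
    (hcard : J.card + m.card + 3 = Module.finrank ℝ E)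
    (hface : ∀ v ∉ J, P.IsFace (insert v J) → IsHyperbolic (P.mixedVolBilin c (insert v J) m)) :
    IsHyperbolic (P.mixedVolBilin c J (f ::ₘ m)) := by
  cases nonempty_fintype ι
  obtain ⟨t, ht, ht_lt⟩ := hf.exists_apply_eq_lt hJ
  obtain ⟨κ, hκ_eq⟩ : ∃ κ : ι → ℝ, κ = fun v => f v - u v t := ⟨_, rfl⟩
  have hκ : ∀ j ∈ J, κ j = 0 := fun j hj => by simp [hκ_eq, ht j hj]
  have hκ_pos : ∀ j ∉ J, 0 < κ j := fun j hj => by simp [hκ_eq, ht_lt j hj]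
  refine ⟨P.mixedVolLinear c J (f ::ₘ f ::ₘ m), fun g hg => ?_⟩
  obtain ⟨I, hI, hJI⟩ := hJ
  set s := solve u I g
  have hκ_div : κ * (fun v => (g v - u v s) / κ v) = fun v => g v - u v s := by
    ext v
    rcases eq_or_ne (κ v) 0 with h | h
    · have hv : v ∈ J := by_contra fun hv => (hκ_pos v hv).ne' h
      simp [h, s, (P.isCoordSystem I hI).apply_solve g (hJI hv)]
    · simp [mul_div_cancel₀ _ h]
  have htranslate : ∀ m' : Multiset (ι → ℝ), m'.card = m.card + 2 →
      P.mixedVol c J ((fun v => g v - u v s) ::ₘ m') = P.mixedVol c J (g ::ₘ m') :=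
    fun m' hm' => mixedVol_cons_sub_eval hc (by omega) g s
  have key := hf.dotProduct_mixedVolMatrix_mulVec_nonpos hc hm hcard hκ_eq hκ hκ_pos hface
    (r := fun v => (g v - u v s) / κ v) (by rw [hκ_div, htranslate _ (by simp)]; exact hg)
  rwa [dotProduct_mixedVolMatrix_mulVec hc hκ, hκ_div, htranslate _ (by simp), Multiset.cons_swap,
    htranslate _ (by simp)] at key

lemma isHyperbolic_mixedVolBilin [Finite ι] (hc : P.IsGeneric c) (hm : ∀ f ∈ m, P.IsAmple f)
    (hJ : P.IsFace J) (hcard : J.card + m.card + 2 = Module.finrank ℝ E) :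
    IsHyperbolic (P.mixedVolBilin c J m) := by
  induction m using Multiset.induction generalizing J with
  | empty => exact isHyperbolic_mixedVolBilin_zero hc hJ (by simpa using hcard)
  | cons f m ih =>
    rw [Multiset.forall_mem_cons] at hm
    rw [Multiset.card_cons] at hcard
    refine hm.1.isHyperbolic_mixedVolBilin_cons hc hm.2 hJ (by omega) fun v hv hface => ?_
    refine ih hm.2 hface ?_
    rw [Finset.card_insert_of_notMem hv]
    omega

end Step

lemma continuous_mixedVol_map_add_smul (c : Module.Dual ℝ E) (J : Finset ι)
    (m : Multiset (ι → ℝ)) (h : ι → ℝ) :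
    Continuous fun ε : ℝ => P.mixedVol c J (m.map (· + ε • h)) := by
  refine continuous_finsetSum _ fun I _ => Continuous.div_const (continuous_const.mul ?_) _
  simp only [Multiset.map_map, Function.comp_apply, map_add, map_smul, smul_eq_mul]
  exact continuous_multiset_prod _ fun f _ => by fun_prop

theorem mixedVol_mul_mixedVol_le_sq [Finite ι] (hc : P.IsGeneric c) (hm : ∀ h ∈ m, P.IsNef h)
    (hcard : m.card + 2 = Module.finrank ℝ E) (f : ι → ℝ) (hg : P.IsNef g) :
    P.mixedVol c ∅ (f ::ₘ f ::ₘ m) * P.mixedVol c ∅ (g ::ₘ g ::ₘ m) ≤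
      P.mixedVol c ∅ (f ::ₘ g ::ₘ m) ^ 2 := by
  have hcont := fun m => P.continuous_mixedVol_map_add_smul c ∅ m P.bound
  have hample : ∀ {h : ι → ℝ}, P.IsNef h → ∀ {ε : ℝ}, 0 < ε → P.IsAmple (h + ε • P.bound) :=
    fun hh _ hε => hh.add_isAmple (isAmple_bound.smul hε)
  suffices ∀ ε : ℝ, 0 < ε → P.mixedVol c ∅ ((f ::ₘ f ::ₘ m).map (· + ε • P.bound)) *
      P.mixedVol c ∅ ((g ::ₘ g ::ₘ m).map (· + ε • P.bound)) ≤
      P.mixedVol c ∅ ((f ::ₘ g ::ₘ m).map (· + ε • P.bound)) ^ 2 by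
    simpa using ContinuousWithinAt.closure_le (s := Set.Ioi (0 : ℝ)) (x := 0) (by simp)
      ((hcont _).mul (hcont _)).continuousWithinAt ((hcont _).pow 2).continuousWithinAt this
  intro ε hε
  have hε_ample : ∀ h ∈ m.map (· + ε • P.bound), P.IsAmple h := by
    simpa using fun h hh => hample (hm h hh) hε
  simp only [Multiset.map_cons]
  refine (isHyperbolic_mixedVolBilin hc hε_ample P.isFace_empty (by simpa using hcard)).mul_le_sq
    mixedVolBilin_isSymm _ (mixedVol_pos hc ?_ P.isFace_empty (by simpa using hcard))
  simpa using ⟨hample hg hε, fun h hh => hample (hm h hh) hε⟩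

end SimplePolytope

/-! ### The Lawrence–Varchenko decomposition -/

/-- The indicator of `0 ≤ s` if `0 ≤ γ`, and minus the indicator of `s < 0` if `γ < 0`. A product
of such factors is the signed indicator of a vertex cone whose edges have been flipped so that a
given functional, with slopes `γ`, is bounded above on it. -/
noncomputable def flippedStep (γ s : ℝ) : ℝ := (if 0 ≤ s then 1 else 0) - if γ < 0 then 1 else 0

lemma flippedStep_ne_zero {γ s : ℝ} : flippedStep γ s ≠ 0 ↔ (0 ≤ s ↔ 0 ≤ γ) := by
  rw [flippedStep]
  split_ifs with hs hγ hγ <;> simp [hs, hγ, not_le.mpr, not_lt.mp]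

lemma flippedStep_of_nonneg {γ s : ℝ} (hγ : 0 ≤ γ) (hs : 0 ≤ s) : flippedStep γ s = 1 := by
  simp [flippedStep, hγ.not_gt, hs]

/-- The polyhedron with facet normals `u j` and right-hand sides `h j`. -/
def polyhedron {ι E : Type*} [AddCommGroup E] [Module ℝ E] (u : ι → Module.Dual ℝ E)
    (h : ι → ℝ) : Set E :=
  {z | ∀ j, u j z ≤ h j}

namespace SimplePolytope

variable {ι E : Type*} [DecidableEq ι] [AddCommGroup E] [Module ℝ E]
  {u : ι → Module.Dual ℝ E} {P : SimplePolytope u} {c c' : Module.Dual ℝ E}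

open Classical in
lemma sum_prod_neg_indicator_slope_neg (hc : P.IsGeneric c) (J : Finset ι) :
    ∑ I ∈ P.vertices with J ⊆ I, ∏ i ∈ I \ J, (-(if slope u c I i < 0 then (1 : ℝ) else 0)) =
      if P.IsFace J then (-1) ^ (Module.finrank ℝ E - J.card) else 0 := by
  split_ifs with hJ
  · obtain ⟨M, hM, hJM, hpos⟩ := hJ.exists_slope_pos hc.neg
    have hneg : ∀ i ∈ M \ J, slope u c M i < 0 := fun i hi => neg_pos.mp (hpos i hi)
    rw [Finset.sum_eq_single M]
    · rw [Finset.prod_congr rfl fun i hi => by rw [if_pos (hneg i hi)], Finset.prod_const,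
        Finset.card_sdiff_of_subset hJM, (P.isCoordSystem M hM).card_eq_finrank]
    · intro I hI hIM
      obtain ⟨hI, hJI⟩ := Finset.mem_filter.mp hI
      contrapose! hIM
      refine eq_of_slope_pos hI hM hJI hJM (fun i hi => ?_) hpos
      suffices slope u c I i < 0 from neg_pos.mpr this
      by_contra h0
      exact Finset.prod_ne_zero_iff.mp hIM i hi (by rw [if_neg h0, neg_zero])
    · exact fun h => absurd (Finset.mem_filter.mpr ⟨hM, hJM⟩) h
  · exact Finset.sum_eq_zero fun I hI => absurd ⟨I, Finset.mem_filter.mp hI⟩ hJ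

lemma sum_prod_sub_indicator_slope_neg [Fintype ι] (c : Module.Dual ℝ E) (p : ι → ℝ) :
    ∑ I ∈ P.vertices, ∏ i ∈ I, (p i - if slope u c I i < 0 then (1 : ℝ) else 0) =
      ∑ J : Finset ι, (∏ i ∈ J, p i) * ∑ I ∈ P.vertices with J ⊆ I,
        ∏ i ∈ I \ J, (-(if slope u c I i < 0 then (1 : ℝ) else 0)) := by
  simp_rw [sub_eq_add_neg, Finset.prod_add, Finset.mul_sum, Finset.sum_filter]
  rw [Finset.sum_comm]
  refine Finset.sum_congr rfl fun I _ => ?_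
  rw [← Finset.sum_filter]
  exact Finset.sum_congr (by ext; simp) fun _ _ => rfl

lemma sum_prod_sub_indicator_slope_neg_congr [Finite ι] (hc : P.IsGeneric c)
    (hc' : P.IsGeneric c') (p : ι → ℝ) :
    ∑ I ∈ P.vertices, ∏ i ∈ I, (p i - if slope u c I i < 0 then (1 : ℝ) else 0) =
      ∑ I ∈ P.vertices, ∏ i ∈ I, (p i - if slope u c' I i < 0 then (1 : ℝ) else 0) := by
  cases nonempty_fintype ι
  simp only [sum_prod_sub_indicator_slope_neg, sum_prod_neg_indicator_slope_neg hc,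
    sum_prod_neg_indicator_slope_neg hc']

lemma exists_isGeneric_forall_neg (hc : P.IsGeneric c) (d : Module.Dual ℝ E) (T : Finset E)
    (hT : ∀ y ∈ T, d y < 0) : ∃ c' : Module.Dual ℝ E, P.IsGeneric c' ∧ ∀ y ∈ T, c' y < 0 := by
  have htendsto : ∀ a b : ℝ,
      Filter.Tendsto (fun ε => a + ε * b) (nhdsWithin 0 (Set.Ioi 0)) (nhds a) := fun a b => by
    have h : Continuous fun ε : ℝ => a + ε * b := by fun_prop
    simpa using (h.tendsto 0).mono_left nhdsWithin_le_nhds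
  have hneg : ∀ᶠ ε in nhdsWithin (0 : ℝ) (Set.Ioi 0), ∀ y ∈ T, d y + ε * c y < 0 :=
    (Filter.eventually_all_finset T).mpr fun y hy =>
      (htendsto (d y) (c y)).eventually_lt_const (hT y hy)
  have hgen : ∀ᶠ ε in nhdsWithin (0 : ℝ) (Set.Ioi 0), ∀ I ∈ P.vertices, ∀ i ∈ I,
      slope u d I i + ε * slope u c I i ≠ 0 := by
    refine (Filter.eventually_all_finset _).mpr fun I hI =>
      (Filter.eventually_all_finset I).mpr fun i hi => ?_
    rcases eq_or_ne (slope u d I i) 0 with h0 | h0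
    · filter_upwards [self_mem_nhdsWithin] with ε hε
      rw [h0, zero_add]
      exact mul_ne_zero (ne_of_gt hε) (hc I hI i hi)
    · exact (htendsto _ _).eventually_ne h0
  obtain ⟨ε, hε, hε'⟩ := (hneg.and hgen).exists
  exact ⟨d + ε • c, fun I hI i hi => by simpa [slope] using hε' I hI i hi,
    fun y hy => by simpa using hε y hy⟩

lemma sum_prod_flippedStep_of_mem (hc : P.IsGeneric c) {h : ι → ℝ} {z : E}
    (hz : z ∈ polyhedron u h) :
    ∑ I ∈ P.vertices, ∏ i ∈ I, flippedStep (slope u c I i) (h i - u i z) = 1 := by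
  obtain ⟨M, hM, -, hpos⟩ := (isFace_empty (P := P)).exists_slope_pos hc
  rw [Finset.sum_eq_single_of_mem M hM]
  · exact Finset.prod_eq_one fun i hi =>
      flippedStep_of_nonneg (hpos i (by simpa using hi)).le (sub_nonneg.mpr (hz i))
  · intro I hI hIM
    contrapose! hIM
    refine eq_of_slope_pos hI hM I.empty_subset M.empty_subset (fun i hi => ?_) hpos
    replace hi : i ∈ I := by simpa using hi
    have hstep := flippedStep_ne_zero.mp (Finset.prod_ne_zero_iff.mp hIM i hi)
    exact (hstep.mp (sub_nonneg.mpr (hz i))).lt_of_ne' (hc I hI i hi)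

-- The sum does not depend on the generic functional; near the facet normal `u i` of a violated
-- constraint, each of its terms vanishes.
lemma sum_prod_flippedStep_of_lt [Finite ι] (hc : P.IsGeneric c) {h : ι → ℝ} (hh : P.IsNef h)
    {z : E} {i : ι} (hz : h i < u i z) :
    ∑ I ∈ P.vertices, ∏ i ∈ I, flippedStep (slope u c I i) (h i - u i z) = 0 := by
  classical
  have hlt : ∀ y ∈ P.vertices.image fun I => solve u I (h - fun j => u j z), u i y < 0 := by
    refine Finset.forall_mem_image.mpr fun I hI => ?_
    rw [map_sub, (P.isCoordSystem I hI).solve_eval, map_sub, sub_neg]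
    exact (hh I hI i).trans_lt hz
  obtain ⟨c', hc', hneg⟩ := exists_isGeneric_forall_neg hc (u i) _ hlt
  simp only [flippedStep]
  rw [sum_prod_sub_indicator_slope_neg_congr hc hc' fun i => if 0 ≤ h i - u i z then 1 else 0]
  refine Finset.sum_eq_zero fun I hI => ?_
  by_contra hne
  refine (hneg _ (Finset.mem_image_of_mem _ hI)).not_ge ?_
  rw [(P.isCoordSystem I hI).map_solve_eq_sum]
  refine Finset.sum_nonneg fun j hj => ?_
  have hstep : 0 ≤ h j - u j z ↔ 0 ≤ slope u c' I j :=
    flippedStep_ne_zero.mp (Finset.prod_ne_zero_iff.mp hne j hj)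
  rcases le_or_gt 0 (slope u c' I j) with hs | hs
  · exact mul_nonneg (hstep.mpr hs) hs
  · exact mul_nonneg_of_nonpos_of_nonpos
      (not_le.mp fun h0 => hs.not_ge (hstep.mp h0)).le hs.le

theorem sum_prod_flippedStep [Finite ι] (hc : P.IsGeneric c) {h : ι → ℝ} (hh : P.IsNef h)
    (z : E) : ∑ I ∈ P.vertices, ∏ i ∈ I, flippedStep (slope u c I i) (h i - u i z) =
      (polyhedron u h).indicator 1 z := by
  by_cases hz : z ∈ polyhedron u h
  · rw [sum_prod_flippedStep_of_mem hc hz, Set.indicator_of_mem hz, Pi.one_apply]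
  · obtain ⟨i, hi⟩ := not_forall.mp hz
    rw [sum_prod_flippedStep_of_lt hc hh (not_le.mp hi), Set.indicator_of_notMem hz]

lemma indicator_polyhedron_exp [Finite ι] (hc : P.IsGeneric c) {h : ι → ℝ} (hh : P.IsNef h) :
    (polyhedron u h).indicator (fun z => Real.exp (c z)) = fun z => ∑ I ∈ P.vertices,
      Real.exp (c z) * ∏ i ∈ I, flippedStep (slope u c I i) (h i - u i z) := by
  ext z
  rw [← Finset.mul_sum, sum_prod_flippedStep hc hh]
  by_cases hz : z ∈ polyhedron u h <;> simp [hz]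

end SimplePolytope

/-! ### The volume of a simple polytope -/

section ExpIntegral

/-- The exponential with slope `γ`, restricted to the half-line bounded by `h` on which it is
integrable, and with a minus sign if that is the upper half-line. -/
noncomputable def flippedExp (γ h z : ℝ) : ℝ := Real.exp (γ * z) * flippedStep γ (h - z)

lemma flippedExp_of_pos {γ : ℝ} (hγ : 0 < γ) (h : ℝ) :
    flippedExp γ h = (Set.Iic h).indicator fun z => Real.exp (γ * z) := by
  ext z
  simp [flippedExp, flippedStep, hγ.le.not_gt, Set.indicator_apply]

lemma flippedExp_of_neg {γ : ℝ} (hγ : γ < 0) (h : ℝ) :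
    flippedExp γ h = -(Set.Ioi h).indicator fun z => Real.exp (γ * z) := by
  ext z
  by_cases hz : z ≤ h <;> simp [flippedExp, flippedStep, hγ, hz, not_lt.mpr, not_le.mp]

lemma integrable_flippedExp {γ : ℝ} (hγ : γ ≠ 0) (h : ℝ) : Integrable (flippedExp γ h) := by
  rcases hγ.lt_or_gt with hγ | hγ
  · rw [flippedExp_of_neg hγ]
    exact ((integrable_indicator_iff measurableSet_Ioi).mpr (integrableOn_exp_mul_Ioi hγ h)).neg
  · rw [flippedExp_of_pos hγ]
    exact (integrable_indicator_iff measurableSet_Iic).mpr (integrableOn_exp_mul_Iic hγ h)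

lemma integral_flippedExp {γ : ℝ} (hγ : γ ≠ 0) (h : ℝ) :
    ∫ z, flippedExp γ h z = Real.exp (γ * h) / γ := by
  rcases hγ.lt_or_gt with hγ | hγ
  · rw [flippedExp_of_neg hγ, integral_neg', integral_indicator measurableSet_Ioi,
      integral_exp_mul_Ioi hγ, neg_div, neg_neg]
  · rw [flippedExp_of_pos hγ, integral_indicator measurableSet_Iic,
      integral_exp_mul_Iic hγ]

lemma tendsto_exp_sub_taylor_div_pow (n : ℕ) (y : ℝ) :
    Filter.Tendsto (fun s : ℝ =>
        (Real.exp (s * y) - ∑ k ∈ Finset.range n, (s * y) ^ k / k.factorial) / s ^ n)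
      (nhdsWithin 0 (Set.Ioi 0)) (nhds (y ^ n / n.factorial)) := by
  have hmul : Filter.Tendsto (fun s : ℝ => s * y) (nhdsWithin 0 (Set.Ioi 0)) (nhds 0) := by
    have h : Continuous fun s : ℝ => s * y := by fun_prop
    simpa using (h.tendsto 0).mono_left nhdsWithin_le_nhds
  have hO : (fun s : ℝ => (s * y) ^ n) =O[nhdsWithin 0 (Set.Ioi 0)] (fun s : ℝ => s ^ n) := by
    simpa only [mul_pow, mul_comm] using
      (Asymptotics.isBigO_refl (fun s : ℝ => s ^ n) _).const_mul_left (y ^ n)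
  have hlim := (((Real.exp_sub_sum_range_succ_isLittleO_pow n).comp_tendsto hmul).trans_isBigO
    hO).tendsto_div_nhds_zero.add_const (y ^ n / n.factorial)
  rw [zero_add] at hlim
  refine hlim.congr' ?_
  filter_upwards [self_mem_nhdsWithin] with s (hs : 0 < s)
  simp only [Function.comp, Finset.sum_range_succ, mul_pow s y n]
  field_simp
  ring

lemma tendsto_integral_exp_mul {Ω : Type*} [MeasurableSpace Ω] {μ : Measure Ω} {f : Ω → ℝ}
    (hf : Integrable (fun z => Real.exp (f z)) μ) (hf' : Integrable (fun z => Real.exp (-f z)) μ) :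
    Filter.Tendsto (fun s => ∫ z, Real.exp (s * f z) ∂μ) (nhdsWithin 0 (Set.Ioi 0))
      (nhds (μ.real Set.univ)) := by
  have hIoo : Set.Ioo (-1) 1 ⊆ ProbabilityTheory.integrableExpSet f μ :=
    Set.Ioo_subset_Icc_self.trans <| ProbabilityTheory.convex_integrableExpSet.ordConnected.out
      (by simpa [ProbabilityTheory.integrableExpSet] using hf')
      (by simpa [ProbabilityTheory.integrableExpSet] using hf)
  have hzero : (0 : ℝ) ∈ interior (ProbabilityTheory.integrableExpSet f μ) :=
    interior_maximal hIoo isOpen_Ioo (by norm_num)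
  rw [← ProbabilityTheory.mgf_zero' (X := f)]
  exact (ProbabilityTheory.continuousOn_mgf.continuousAt
    (isOpen_interior.mem_nhds hzero)).tendsto.mono_left nhdsWithin_le_nhds

end ExpIntegral

section Volume

variable {ι E : Type*} [NormedAddCommGroup E] [NormedSpace ℝ E] [FiniteDimensional ℝ E]
  {u : ι → Module.Dual ℝ E} {I : Finset ι}

lemma isClosed_polyhedron (h : ι → ℝ) : IsClosed (polyhedron u h) := by
  simp only [polyhedron, Set.ofPred_forall]
  exact isClosed_iInter fun j =>
    isClosed_le (LinearMap.continuous_of_finiteDimensional _) continuous_const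

variable [MeasurableSpace E] [BorelSpace E] {μ : Measure E}

/-- The volume of the parallelepiped spanned by the vectors dual to the coordinates `u i`,
`i ∈ I`. -/
noncomputable def parallelepipedVolume (μ : Measure E) (u : ι → Module.Dual ℝ E)
    (I : Finset ι) : ℝ :=
  μ.real {z | ∀ i ∈ I, u i z ∈ Set.Ioc (0 : ℝ) 1}

/-- The coordinates of a coordinate system as a measurable equivalence. -/
noncomputable def IsCoordSystem.measurableEquiv (h : IsCoordSystem u I) : E ≃ᵐ (I → ℝ) :=
  (LinearEquiv.ofBijective _ h).toContinuousLinearEquiv.toHomeomorph.toMeasurableEquiv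

lemma IsCoordSystem.measurableEquiv_apply (h : IsCoordSystem u I) (z : E) (i : I) :
    h.measurableEquiv z i = u i z := rfl

variable [μ.IsAddHaarMeasure]

lemma IsCoordSystem.map_measurableEquiv (h : IsCoordSystem u I) :
    μ.map h.measurableEquiv = ENNReal.ofReal (parallelepipedVolume μ u I) • volume := by
  have : (μ.map h.measurableEquiv).IsAddHaarMeasure :=
    (LinearEquiv.ofBijective _ h).toContinuousLinearEquiv.isAddHaarMeasure_map μ
  have hsmul := Measure.isAddLeftInvariant_eq_smul (μ.map h.measurableEquiv) volume
  have hbox : μ.map h.measurableEquiv (Set.univ.pi fun _ => Set.Ioc (0 : ℝ) 1) =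
      μ {z | ∀ i ∈ I, u i z ∈ Set.Ioc (0 : ℝ) 1} := by
    rw [h.measurableEquiv.map_apply]
    congr 1
    ext z
    simp [h.measurableEquiv_apply]
  rw [hsmul, Measure.smul_apply, Real.volume_pi_Ioc] at hbox
  simp only [sub_zero, ENNReal.ofReal_one, Finset.prod_const_one] at hbox
  rw [hsmul, parallelepipedVolume, Measure.real, ← hbox, ENNReal.smul_def, ENNReal.smul_def,
    smul_eq_mul, mul_one, ENNReal.coe_toReal, ENNReal.ofReal_coe_nnreal]

variable [DecidableEq ι] {c : Module.Dual ℝ E}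

lemma IsCoordSystem.exp_mul_prod_flippedStep (h : IsCoordSystem u I) (f : ι → ℝ) :
    (fun z => Real.exp (c z) * ∏ i ∈ I, flippedStep (slope u c I i) (f i - u i z)) =
      fun z => ∏ i : I, flippedExp (slope u c I i) (f i) (h.measurableEquiv z i) := by
  refine funext fun z => Eq.trans ?_ (Finset.prod_coe_sort I fun i =>
    flippedExp (slope u c I i) (f i) (u i z)).symm
  simp only [flippedExp]
  rw [Finset.prod_mul_distrib, ← Real.exp_sum, h.map_eq_sum c z]
  congr 2
  exact Finset.sum_congr rfl fun i _ => mul_comm _ _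

lemma IsCoordSystem.integrable_exp_mul_prod_flippedStep (h : IsCoordSystem u I)
    (hc : ∀ i ∈ I, slope u c I i ≠ 0) (f : ι → ℝ) :
    Integrable (fun z => Real.exp (c z) * ∏ i ∈ I, flippedStep (slope u c I i) (f i - u i z))
      μ := by
  rw [h.exp_mul_prod_flippedStep]
  refine (integrable_map_equiv h.measurableEquiv fun y =>
    ∏ i : I, flippedExp (slope u c I i) (f i) (y i)).mp ?_
  rw [h.map_measurableEquiv]
  exact (Integrable.fintype_prod fun i : I =>
    integrable_flippedExp (hc i i.2) (f i)).smul_measure ENNReal.ofReal_ne_top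

lemma IsCoordSystem.integral_exp_mul_prod_flippedStep (h : IsCoordSystem u I)
    (hc : ∀ i ∈ I, slope u c I i ≠ 0) (f : ι → ℝ) :
    ∫ z, Real.exp (c z) * ∏ i ∈ I, flippedStep (slope u c I i) (f i - u i z) ∂μ =
      parallelepipedVolume μ u I * Real.exp (c (solve u I f)) / ∏ i ∈ I, slope u c I i := by
  have hvol : 0 ≤ parallelepipedVolume μ u I := measureReal_nonneg
  rw [h.exp_mul_prod_flippedStep,
    ← integral_map_equiv h.measurableEquiv fun y =>
      ∏ i : I, flippedExp (slope u c I i) (f i) (y i),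
    h.map_measurableEquiv, integral_smul_measure, ENNReal.toReal_ofReal hvol, smul_eq_mul,
    mul_div_assoc,
    integral_fintype_prod_volume_eq_prod fun i : I => flippedExp (slope u c I i) (f i),
    Finset.prod_congr rfl fun (i : I) _ => integral_flippedExp (hc i i.2) (f i),
    Finset.prod_coe_sort I fun i => Real.exp (slope u c I i * f i) / slope u c I i,
    Finset.prod_div_distrib, ← Real.exp_sum, h.map_solve_eq_sum]
  congr 3
  exact Finset.sum_congr rfl fun i _ => mul_comm _ _

end Volume

namespace SimplePolytope

variable {ι E : Type*} [Finite ι] [DecidableEq ι] [NormedAddCommGroup E] [NormedSpace ℝ E]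
  [FiniteDimensional ℝ E] [MeasurableSpace E] [BorelSpace E] {μ : Measure E} [μ.IsAddHaarMeasure]
  {u : ι → Module.Dual ℝ E} {P : SimplePolytope u} {c : Module.Dual ℝ E} {h : ι → ℝ}

lemma integrableOn_exp_polyhedron (hc : P.IsGeneric c) (hh : P.IsNef h) :
    IntegrableOn (fun z => Real.exp (c z)) (polyhedron u h) μ := by
  rw [← integrable_indicator_iff (isClosed_polyhedron h).measurableSet,
    indicator_polyhedron_exp hc hh]
  exact integrable_finsetSum _ fun I hI =>
    (P.isCoordSystem I hI).integrable_exp_mul_prod_flippedStep (hc I hI) h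

variable (hw : ∀ I ∈ P.vertices, P.weight I = parallelepipedVolume μ u I)
include hw

lemma integral_exp_polyhedron (hc : P.IsGeneric c) (hh : P.IsNef h) :
    ∫ z in polyhedron u h, Real.exp (c z) ∂μ = ∑ I ∈ P.vertices,
      P.weight I * Real.exp (c (solve u I h)) / ∏ i ∈ I, slope u c I i := by
  rw [← integral_indicator (isClosed_polyhedron h).measurableSet, indicator_polyhedron_exp hc hh,
    integral_finsetSum _ fun I hI =>
      (P.isCoordSystem I hI).integrable_exp_mul_prod_flippedStep (hc I hI) h]
  exact Finset.sum_congr rfl fun I hI => by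
    rw [(P.isCoordSystem I hI).integral_exp_mul_prod_flippedStep (hc I hI) h, hw I hI]

lemma integral_exp_smul_polyhedron (hc : P.IsGeneric c) (hh : P.IsNef h) {s : ℝ} (hs : 0 < s) :
    ∫ z in polyhedron u h, Real.exp (s * c z) ∂μ =
      ∑ I ∈ P.vertices, P.weight I / (∏ i ∈ I, slope u c I i) *
        ((Real.exp (s * c (solve u I h)) - ∑ k ∈ Finset.range (Module.finrank ℝ E),
          (s * c (solve u I h)) ^ k / k.factorial) / s ^ Module.finrank ℝ E) := by
  have hpow : ∀ k ∈ Finset.range (Module.finrank ℝ E), ∑ I ∈ P.vertices,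
      P.weight I / (∏ i ∈ I, slope u c I i) * ((s * c (solve u I h)) ^ k / k.factorial) = 0 := by
    intro k hk
    have hzero := mixedVol_eq_zero_of_card_lt hc ∅ (Multiset.replicate k h)
      (by simpa using Finset.mem_range.mp hk)
    rw [mixedVol_replicate] at hzero
    simp only [mul_pow, mul_div_right_comm _ (_ ^ k) (k.factorial : ℝ),
      mul_left_comm _ (s ^ k / _), ← Finset.mul_sum, hzero, mul_zero]
  have hprod : ∀ I ∈ P.vertices, ∏ i ∈ I, slope u (s • c) I i =
      s ^ Module.finrank ℝ E * ∏ i ∈ I, slope u c I i := fun I hI => by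
    rw [← (P.isCoordSystem I hI).card_eq_finrank, ← Finset.prod_const, ← Finset.prod_mul_distrib]
    rfl
  have hexp := integral_exp_polyhedron hw (hc.smul hs.ne') hh
  simp only [LinearMap.smul_apply, smul_eq_mul] at hexp
  simp only [← mul_div_assoc, ← Finset.sum_div, mul_sub, Finset.sum_sub_distrib]
  simp_rw [Finset.mul_sum]
  rw [Finset.sum_comm, Finset.sum_eq_zero hpow, sub_zero, hexp, Finset.sum_div]
  refine Finset.sum_congr rfl fun I hI => ?_
  rw [hprod I hI]
  ring

-- The volume is the limit of the Laplace transform as the functional tends to zero.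
theorem factorial_mul_measureReal_polyhedron (hc : P.IsGeneric c) (hh : P.IsNef h) :
    (Module.finrank ℝ E).factorial * μ.real (polyhedron u h) =
      P.mixedVol c ∅ (Multiset.replicate (Module.finrank ℝ E) h) := by
  have hleft := tendsto_integral_exp_mul (f := c) (integrableOn_exp_polyhedron (μ := μ) hc hh)
    (integrableOn_exp_polyhedron (μ := μ) hc.neg hh)
  have hright : Filter.Tendsto (fun s : ℝ => ∫ z in polyhedron u h, Real.exp (s * c z) ∂μ)
      (nhdsWithin 0 (Set.Ioi 0)) (nhds (∑ I ∈ P.vertices, P.weight I / (∏ i ∈ I, slope u c I i) *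
        (c (solve u I h) ^ Module.finrank ℝ E / (Module.finrank ℝ E).factorial))) :=
    (tendsto_finsetSum _ fun I _ => (tendsto_exp_sub_taylor_div_pow _ _).const_mul _).congr' <| by
      filter_upwards [self_mem_nhdsWithin] with s hs
      exact (integral_exp_smul_polyhedron hw hc hh hs).symm
  have heq := tendsto_nhds_unique hleft hright
  rw [measureReal_restrict_apply_univ] at heq
  rw [heq, mixedVol_replicate, Finset.mul_sum]
  exact Finset.sum_congr rfl fun I _ => by field_simp

end SimplePolytope

/-! ### Finitely generated cones and support functions -/

section Cones

variable {𝕜 W α : Type*} [Field 𝕜] [LinearOrder 𝕜] [IsStrictOrderedRing 𝕜]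
  [AddCommGroup W] [Module 𝕜 W]

lemma exists_nonneg_forall_mul_le_iff (s : Finset α) (p q : α → 𝕜) :
    (∃ t, 0 ≤ t ∧ ∀ i ∈ s, t * p i ≤ q i) ↔
      (∀ i ∈ s, 0 ≤ p i → 0 ≤ q i) ∧
        ∀ i ∈ s, ∀ j ∈ s, 0 < p i → p j < 0 → 0 ≤ p i * q j - p j * q i := by
  classical
  constructor
  · rintro ⟨t, ht, h⟩
    exact ⟨fun i hi hp ↦ (mul_nonneg ht hp).trans (h i hi),
      fun i hi j hj hpi hpj ↦ by nlinarith [h i hi, h j hj]⟩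
  · rintro ⟨hnonneg, hpair⟩
    let T : Finset 𝕜 := insert 0 ((s.filter (p · < 0)).image fun j ↦ q j / p j)
    have hT : T.Nonempty := Finset.insert_nonempty _ _
    refine ⟨T.max' hT, T.le_max' _ (Finset.mem_insert_self _ _), fun i hi ↦ ?_⟩
    rcases lt_trichotomy (p i) 0 with hpi | hpi | hpi
    · exact (div_le_iff_of_neg hpi).mp <| T.le_max' _ <| Finset.mem_insert_of_mem <|
        Finset.mem_image_of_mem _ <| Finset.mem_filter.mpr ⟨hi, hpi⟩
    · simpa [hpi] using hnonneg i hi hpi.ge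
    · suffices ∀ t ∈ T, t * p i ≤ q i from this _ (T.max'_mem hT)
      intro t ht
      obtain rfl | ht := Finset.mem_insert.mp ht
      · simpa using hnonneg i hi hpi.le
      · obtain ⟨j, hj, rfl⟩ := Finset.mem_image.mp ht
        obtain ⟨hj, hpj⟩ := Finset.mem_filter.mp hj
        rw [div_mul_eq_mul_div, div_le_iff_of_neg hpj]
        linarith [hpair i hi j hj hpi hpj]

lemma dualFG_bot [FiniteDimensional 𝕜 W] :
    (⊥ : PointedCone 𝕜 W).DualFG (LinearMap.id : Module.Dual 𝕜 W →ₗ[𝕜] Module.Dual 𝕜 W) := by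
  classical
  let b := Module.finBasis 𝕜 W
  refine ⟨Finset.univ.image b.coord ∪ Finset.univ.image (-b.coord ·), ?_⟩
  ext x
  rw [PointedCone.mem_dual, Submodule.mem_bot]
  refine ⟨fun h ↦ b.ext_elem fun i ↦ ?_, by rintro rfl; simp⟩
  have hle : 0 ≤ b.coord i x :=
    h <| Finset.mem_union_left _ <| Finset.mem_image_of_mem _ (Finset.mem_univ i)
  have hge : 0 ≤ (-b.coord i) x :=
    h <| Finset.mem_union_right _ <| Finset.mem_image_of_mem _ (Finset.mem_univ i)
  simpa using le_antisymm (neg_nonneg.mp hge) hle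

lemma mem_hull_insert_iff {s : Set W} {a x : W} :
    x ∈ PointedCone.hull 𝕜 (insert a s) ↔ ∃ t : 𝕜, 0 ≤ t ∧ x - t • a ∈ PointedCone.hull 𝕜 s := by
  refine Submodule.mem_span_insert.trans ⟨?_, ?_⟩
  · rintro ⟨t, z, hz, rfl⟩
    exact ⟨t, t.2, by simpa [Nonneg.coe_smul] using hz⟩
  · rintro ⟨t, ht, hx⟩
    exact ⟨⟨t, ht⟩, _, hx, by simp [Nonneg.mk_smul]⟩

/- Fourier–Motzkin elimination: adding a generator `a` amounts to projecting along `a`, which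
replaces the inequalities of opposite signs at `a` by their pairwise combinations vanishing there.
-/
lemma dualFG_hull_insert {s : Set W} (a : W)
    (hs : (PointedCone.hull 𝕜 s).DualFG (LinearMap.id : _ →ₗ[𝕜] Module.Dual 𝕜 W)) :
    (PointedCone.hull 𝕜 (insert a s)).DualFG
      (LinearMap.id : _ →ₗ[𝕜] Module.Dual 𝕜 W) := by
  classical
  obtain ⟨Φ, hΦ⟩ := hs
  let pairs := (Φ ×ˢ Φ).filter fun φψ ↦ 0 < φψ.1 a ∧ φψ.2 a < 0
  refine ⟨Φ.filter (0 ≤ · a) ∪ pairs.image fun φψ ↦ φψ.1 a • φψ.2 - φψ.2 a • φψ.1, ?_⟩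
  ext x
  have hmem : x ∈ PointedCone.hull 𝕜 (insert a s) ↔
      ∃ t : 𝕜, 0 ≤ t ∧ ∀ φ ∈ Φ, t * φ a ≤ φ x := by
    simp [mem_hull_insert_iff, ← hΦ, PointedCone.mem_dual]
  rw [hmem, exists_nonneg_forall_mul_le_iff]
  constructor
  · intro h
    refine ⟨fun φ hφ hφa ↦ h (by simp [hφ, hφa]), fun φ hφ ψ hψ hφa hψa ↦ ?_⟩
    simpa using h <| Finset.mem_union_right _ <| Finset.mem_image_of_mem _
      (show (φ, ψ) ∈ pairs by simp [pairs, hφ, hψ, hφa, hψa])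
  · rintro ⟨hnonneg, hpair⟩ χ hχ
    rcases Finset.mem_union.mp hχ with hχ | hχ
    · exact hnonneg χ (Finset.mem_filter.mp hχ).1 (Finset.mem_filter.mp hχ).2
    · obtain ⟨⟨φ, ψ⟩, h, rfl⟩ := Finset.mem_image.mp hχ
      obtain ⟨⟨hφ, hψ⟩, hφa, hψa⟩ := by simpa [pairs] using h
      simpa using hpair φ hφ ψ hψ hφa hψa

theorem dualFG_hull [FiniteDimensional 𝕜 W] (s : Finset W) :
    (PointedCone.hull 𝕜 (s : Set W)).DualFG (LinearMap.id : _ →ₗ[𝕜] Module.Dual 𝕜 W) := by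
  classical
  induction s using Finset.induction_on with
  | empty => simpa [PointedCone.hull] using dualFG_bot (W := W)
  | insert a s _ ih => simpa using dualFG_hull_insert a ih

end Cones

section SupportFunction

variable {𝕜 E κ : Type*} [Field 𝕜] [LinearOrder 𝕜] [AddCommGroup E] [Module 𝕜 E] {A B : Finset E}

/-- The support function `φ ↦ max_{a ∈ A} φ a` of a finite set `A`, with value `0` if `A = ∅`. -/
noncomputable def supportFun (A : Finset E) (φ : Module.Dual 𝕜 E) : 𝕜 :=
  if h : A.Nonempty then A.sup' h φ else 0

lemma le_supportFun {a : E} (ha : a ∈ A) (φ : Module.Dual 𝕜 E) : φ a ≤ supportFun A φ := by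
  rw [supportFun, dif_pos ⟨a, ha⟩]
  exact Finset.le_sup' φ ha

lemma exists_eq_supportFun (hA : A.Nonempty) (φ : Module.Dual 𝕜 E) :
    ∃ a ∈ A, φ a = supportFun A φ := by
  rw [supportFun, dif_pos hA]
  obtain ⟨a, ha, h⟩ := Finset.exists_mem_eq_sup' hA φ
  exact ⟨a, ha, h.symm⟩

lemma supportFun_mono (hA : A.Nonempty) (h : A ⊆ B) (φ : Module.Dual 𝕜 E) :
    supportFun A φ ≤ supportFun B φ := by
  obtain ⟨a, ha, hφ⟩ := exists_eq_supportFun hA φ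
  exact hφ ▸ le_supportFun (h ha) φ

lemma supportFun_zero (φ : Module.Dual 𝕜 E) : supportFun (0 : Finset E) φ = 0 := by
  simp [supportFun]

variable [IsStrictOrderedRing 𝕜]

lemma le_supportFun_of_mem_convexHull {x : E} (hx : x ∈ convexHull 𝕜 (A : Set E))
    (φ : Module.Dual 𝕜 E) : φ x ≤ supportFun A φ :=
  convexHull_min (fun _ ha ↦ le_supportFun ha φ)
    (convex_halfSpace_le φ.isLinear (supportFun A φ)) hx

lemma supportFun_add [DecidableEq E] (hA : A.Nonempty) (hB : B.Nonempty) (φ : Module.Dual 𝕜 E) :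
    supportFun (A + B) φ = supportFun A φ + supportFun B φ := by
  apply le_antisymm
  · obtain ⟨x, hx, h⟩ := exists_eq_supportFun (hA.add hB) φ
    obtain ⟨a, ha, b, hb, rfl⟩ := Finset.mem_add.mp hx
    rw [← h, map_add]
    exact add_le_add (le_supportFun ha φ) (le_supportFun hb φ)
  · obtain ⟨a, ha, h⟩ := exists_eq_supportFun hA φ
    obtain ⟨b, hb, h'⟩ := exists_eq_supportFun hB φ
    rw [← h, ← h', ← map_add]
    exact le_supportFun (Finset.add_mem_add ha hb) φ

lemma sum_nonempty [DecidableEq E] {A : κ → Finset E} {T : Finset κ}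
    (hA : ∀ k ∈ T, (A k).Nonempty) : (∑ k ∈ T, A k).Nonempty :=
  Finset.sum_induction _ _ (fun _ _ ↦ Finset.Nonempty.add) Finset.zero_nonempty hA

lemma supportFun_sum [DecidableEq E] {A : κ → Finset E} {T : Finset κ}
    (hA : ∀ k ∈ T, (A k).Nonempty) (φ : Module.Dual 𝕜 E) :
    supportFun (∑ k ∈ T, A k) φ = ∑ k ∈ T, supportFun (A k) φ := by
  induction T using Finset.cons_induction with
  | empty => simp [supportFun_zero]
  | cons k T hk ih =>
    obtain ⟨hAk, hAT⟩ := Finset.forall_mem_cons hk _ |>.mp hA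
    rw [Finset.sum_cons, Finset.sum_cons, supportFun_add hAk (sum_nonempty hAT), ih hAT]

/- The point `x` lies in the convex hull of `A` iff `(x, 1)` lies in the cone over `A × {1}`. -/
lemma mem_convexHull_of_mem_hull {x : E}
    (h : (x, (1 : 𝕜)) ∈ PointedCone.hull 𝕜 ((fun a ↦ (a, (1 : 𝕜))) '' (A : Set E))) :
    x ∈ convexHull 𝕜 (A : Set E) := by
  classical
  rw [← Finset.coe_image] at h
  obtain ⟨w, -, hw⟩ := Submodule.mem_span_finset.mp h
  rw [Finset.sum_image fun _ _ _ _ h ↦ congrArg Prod.fst h] at hw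
  have hx : ∑ a ∈ A, (w (a, 1) : 𝕜) • a = x := by
    simpa [Prod.fst_sum, Nonneg.coe_smul] using congrArg Prod.fst hw
  have hone : ∑ a ∈ A, (w (a, 1) : 𝕜) = 1 := by
    simpa [Prod.snd_sum, ← Nonneg.coe_smul] using congrArg Prod.snd hw
  rw [← hx]
  exact (convex_convexHull 𝕜 _).sum_mem (fun a _ ↦ (w (a, 1)).2) hone
    fun a ha ↦ subset_convexHull 𝕜 _ ha

theorem exists_finset_convexHull_eq [FiniteDimensional 𝕜 E] (hA : A.Nonempty) :
    ∃ Φ : Finset (Module.Dual 𝕜 E),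
      convexHull 𝕜 (A : Set E) = {x | ∀ φ ∈ Φ, φ x ≤ supportFun A φ} := by
  classical
  obtain ⟨Φ, hΦ⟩ := dualFG_hull (𝕜 := 𝕜) (A.image fun a ↦ (a, (1 : 𝕜)))
  refine ⟨Φ.image fun φ ↦ -(φ ∘ₗ LinearMap.inl 𝕜 E 𝕜), Set.Subset.antisymm
    (fun x hx φ _ ↦ le_supportFun_of_mem_convexHull hx φ) fun x hx ↦ ?_⟩
  rw [Finset.coe_image] at hΦ
  apply mem_convexHull_of_mem_hull
  rw [← hΦ]
  intro φ hφ
  have hle := hx _ (Finset.mem_image_of_mem _ hφ)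
  obtain ⟨a, ha, hφa⟩ := exists_eq_supportFun hA (-(φ ∘ₗ LinearMap.inl 𝕜 E 𝕜))
  have ha' : (a, (1 : 𝕜)) ∈ PointedCone.dual LinearMap.id (Φ : Set (Module.Dual 𝕜 (E × 𝕜))) :=
    hΦ ▸ PointedCone.subset_hull (Set.mem_image_of_mem _ ha)
  have hnonneg : 0 ≤ φ (a, 1) := ha' hφ
  have hsplit (y : E) : φ (y, 1) = φ (y, 0) + φ (0, 1) := by rw [← map_add]; simp
  simp only [← hφa, LinearMap.neg_apply, LinearMap.comp_apply, LinearMap.inl_apply] at hle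
  rw [hsplit] at hnonneg
  rw [LinearMap.id_apply, hsplit]
  linarith

end SupportFunction

/-! ### Simple perturbations of polyhedra -/

section ParallelepipedVolume

variable {ι E : Type*} [NormedAddCommGroup E] [NormedSpace ℝ E] [FiniteDimensional ℝ E]
  [MeasurableSpace E] [BorelSpace E] {μ : Measure E} [μ.IsAddHaarMeasure]
  {u : ι → Module.Dual ℝ E} {I : Finset ι}

lemma IsCoordSystem.parallelepipedVolume_pos (h : IsCoordSystem u I) :
    0 < parallelepipedVolume μ u I := by
  have hnonneg : 0 ≤ parallelepipedVolume μ u I := measureReal_nonneg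
  refine hnonneg.lt_of_ne' fun h0 => ?_
  have huniv : μ Set.univ = (ENNReal.ofReal (parallelepipedVolume μ u I) •
      (volume : Measure (I → ℝ))) Set.univ := by
    rw [← h.map_measurableEquiv, h.measurableEquiv.map_apply, Set.preimage_univ]
  rw [h0, ENNReal.ofReal_zero, zero_smul] at huniv
  exact isOpen_univ.measure_ne_zero μ Set.univ_nonempty huniv

variable [DecidableEq ι]

-- The transvection moving the coordinate `u k` into `u i` has determinant `u k (edgeDir u I i)`.
lemma IsCoordSystem.parallelepipedVolume_exchange (h : IsCoordSystem u I) {i k : ι} (hi : i ∈ I)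
    (hd : u k (edgeDir u I i) ≠ 0) :
    parallelepipedVolume μ u (insert k (I.erase i)) * |u k (edgeDir u I i)| =
      parallelepipedVolume μ u I := by
  set d := edgeDir u I i
  have hid : u i d = 1 := by simp [d, h.apply_edgeDir hi]
  let T : E →ₗ[ℝ] E := LinearMap.transvection (u k - u i) d
  have hT : ∀ z, T z = z + (u k z - u i z) • d := fun z => by
    simp [T, LinearMap.transvection.apply]
  have hdet : LinearMap.det T = u k d := by simp [T, LinearMap.transvection.det, hid]
  have hTi : ∀ z, u i (T z) = u k z := fun z => by simp [hT, hid]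
  have hTj : ∀ z, ∀ j ∈ I.erase i, u j (T z) = u j z := fun z j hj => by
    simp [hT, d, h.apply_edgeDir (Finset.mem_of_mem_erase hj), Finset.ne_of_mem_erase hj]
  have hpre : {z | ∀ j ∈ insert k (I.erase i), u j z ∈ Set.Ioc (0 : ℝ) 1} =
      T ⁻¹' {z | ∀ j ∈ I, u j z ∈ Set.Ioc (0 : ℝ) 1} := by
    ext z
    conv_rhs => rw [← Finset.insert_erase hi]
    simp only [Set.mem_preimage, Set.mem_ofPred_eq, Finset.forall_mem_insert, hTi]
    exact and_congr_right fun _ => forall₂_congr fun j hj => by rw [hTj z j hj]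
  have hdet0 : LinearMap.det T ≠ 0 := hdet ▸ hd
  rw [parallelepipedVolume, parallelepipedVolume, hpre, Measure.real,
    Measure.addHaar_preimage_linearMap _ hdet0, hdet, ENNReal.toReal_mul,
    ENNReal.toReal_ofReal (abs_nonneg _), abs_inv, mul_right_comm,
    inv_mul_cancel₀ (abs_ne_zero.mpr hd), one_mul, Measure.real]

end ParallelepipedVolume

section VertexOfPolyhedron

variable {ι E : Type*} [AddCommGroup E] [Module ℝ E] {u : ι → Module.Dual ℝ E} {b : ι → ℝ}

lemma exists_isCoordSystem_subset [FiniteDimensional ℝ E] {A : Finset ι}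
    (hA : ∀ y, (∀ i ∈ A, u i y = 0) → y = 0) : ∃ I ⊆ A, IsCoordSystem u I := by
  obtain ⟨s, hsA, -, hspan, hli⟩ :=
    exists_linearIndepOn_extension (linearIndepOn_empty ℝ u) (Set.empty_subset (A : Set ι))
  lift s to Finset ι using A.finite_toSet.subset hsA
  have hker : ∀ y, (∀ i ∈ s, u i y = 0) → y = 0 := fun y hy => hA y fun j hj => by
    have hle : Submodule.span ℝ (u '' s) ≤ LinearMap.ker (Module.Dual.eval ℝ E y) :=
      Submodule.span_le.mpr <| by rintro _ ⟨i, hi, rfl⟩; exact hy i hi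
    exact hle (hspan (Set.mem_image_of_mem u hj))
  refine ⟨s, by exact_mod_cast hsA, .of_card_eq_finrank (le_antisymm ?_ ?_) hker⟩
  · rw [← Subspace.dual_finrank_eq, ← Fintype.card_coe]
    exact hli.fintype_card_le_finrank
  · rw [← Fintype.card_coe, ← Module.finrank_fintype_fun_eq_card ℝ]
    exact LinearMap.finrank_le_finrank_of_injective (f := LinearMap.pi fun i : s => u i) <|
      (injective_iff_map_eq_zero _).mpr fun y hy => hker y fun i hi => congrFun hy ⟨i, hi⟩

variable [Finite ι] (hu : ∀ d ≠ 0, ∃ j, 0 < u j d)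
include hu

-- The ratio test of the simplex method: follow a ray until it leaves the polyhedron.
lemma exists_add_smul_mem_polyhedron {z d : E} (hz : z ∈ polyhedron u b) (hd : d ≠ 0) :
    ∃ k, 0 < u k d ∧ z + ((b k - u k z) / u k d) • d ∈ polyhedron u b := by
  cases nonempty_fintype ι
  obtain ⟨k, hk, hmin⟩ := Finset.exists_min_image (Finset.univ.filter fun j => 0 < u j d)
    (fun j => (b j - u j z) / u j d) ((hu d hd).imp fun j hj => by simpa using hj)
  simp only [Finset.mem_filter_univ] at hk hmin
  refine ⟨k, hk, fun j => ?_⟩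
  rw [map_add, map_smul, smul_eq_mul, ← le_sub_iff_add_le']
  rcases lt_or_ge 0 (u j d) with hj | hj
  · exact (le_div_iff₀ hj).mp (hmin j hj)
  · have hstep : 0 ≤ (b k - u k z) / u k d := div_nonneg (sub_nonneg.mpr (hz k)) hk.le
    exact (mul_nonpos_of_nonneg_of_nonpos hstep hj).trans (sub_nonneg.mpr (hz j))

-- A point with a maximal set of active constraints is a vertex.
lemma exists_isCoordSystem_solve_mem_polyhedron [FiniteDimensional ℝ E]
    (hb : (polyhedron u b).Nonempty) :
    ∃ I, IsCoordSystem u I ∧ solve u I b ∈ polyhedron u b := by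
  cases nonempty_fintype ι
  classical
  let active : E → Finset ι := fun z => Finset.univ.filter fun j => u j z = b j
  obtain ⟨A, ⟨z, hz, rfl⟩, hmax⟩ :=
    (Set.toFinite (active '' polyhedron u b)).exists_maximal (hb.image active)
  have hker : ∀ d, (∀ i ∈ active z, u i d = 0) → d = 0 := by
    intro d hd
    by_contra hne
    obtain ⟨k, hk, hzk⟩ := exists_add_smul_mem_polyhedron hu hz hne
    have hk' : k ∈ active z := by
      refine hmax (Set.mem_image_of_mem active hzk) (fun j hj => ?_) ?_
      · simp [active, hd j hj, (Finset.mem_filter_univ _).mp hj]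
      · simp [active, div_mul_cancel₀ _ hk.ne']
    exact hk.ne' (hd k hk')
  obtain ⟨I, hI, hcoord⟩ := exists_isCoordSystem_subset hker
  have hsolve : solve u I b = z := hcoord.ext fun i hi => by
    rw [hcoord.apply_solve b hi, (Finset.mem_filter_univ _).mp (hI hi)]
  exact ⟨I, hcoord, hsolve ▸ hz⟩

end VertexOfPolyhedron

section GenericBound

variable {ι E : Type*} [AddCommGroup E] [Module ℝ E] {u : ι → Module.Dual ℝ E}

/-- The right-hand side `b` is simple: only the facets of a coordinate system `I` pass through
the point at which they meet. -/
def IsSimpleBound (u : ι → Module.Dual ℝ E) (b : ι → ℝ) : Prop :=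
  ∀ I, IsCoordSystem u I → ∀ j ∉ I, u j (solve u I b) ≠ b j

/-- The slack in the constraint `j` at the point where the facets in `I` meet, as a linear
functional of the right-hand sides. -/
noncomputable def slack (u : ι → Module.Dual ℝ E) (I : Finset ι) (j : ι) :
    Module.Dual ℝ (ι → ℝ) :=
  LinearMap.proj j - u j ∘ₗ solve u I

lemma slack_apply (I : Finset ι) (j : ι) (b : ι → ℝ) :
    slack u I j b = b j - u j (solve u I b) := rfl

lemma IsCoordSystem.slack_ne_zero {I : Finset ι} (h : IsCoordSystem u I) {j : ι} (hj : j ∉ I) :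
    slack u I j ≠ 0 := by
  classical
  have hsolve : solve u I (Pi.single j 1) = 0 := h.ext fun i hi => by
    rw [h.apply_solve _ hi, map_zero, Pi.single_eq_of_ne (ne_of_mem_of_not_mem hi hj)]
  intro h0
  simpa [slack_apply, hsolve] using LinearMap.congr_fun h0 (Pi.single j 1)

variable [Finite ι]

lemma dense_setOf_isSimpleBound (u : ι → Module.Dual ℝ E) : Dense {b | IsSimpleBound u b} := by
  have hset : {b | IsSimpleBound u b} =
      ⋂ r : {r : Finset ι × ι // IsCoordSystem u r.1 ∧ r.2 ∉ r.1},
        slack u r.1.1 r.1.2 ⁻¹' {0}ᶜ := by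
    ext b
    rw [Set.mem_iInter]
    exact ⟨fun hb r h0 => hb _ r.2.1 _ r.2.2 (sub_eq_zero.mp h0).symm,
      fun hb I hI j hj h0 => hb ⟨(I, j), hI, hj⟩ (sub_eq_zero.mpr h0.symm)⟩
  rw [hset]
  refine dense_iInter_of_isOpen (fun r => ?_) fun r => ?_
  · exact isOpen_compl_singleton.preimage (LinearMap.continuous_of_finiteDimensional _)
  · exact (dense_compl_singleton 0).preimage <| LinearMap.isOpenMap_of_finiteDimensional _ <|
      LinearMap.surjective (r.2.1.slack_ne_zero r.2.2)

lemma exists_isSimpleBound (u : ι → Module.Dual ℝ E) (q : ι → ℝ) :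
    ∃ b, IsSimpleBound u b ∧ q ≤ b ∧ ∀ I j, 0 ≤ slack u I j b → 0 ≤ slack u I j q := by
  have hmem : q ∈ closure (Set.univ.pi fun j => Set.Ioi (q j)) := by
    simp [closure_pi_set]
  have hclosure := (dense_setOf_isSimpleBound u).open_subset_closure_inter
    (isOpen_set_pi Set.finite_univ fun j _ => isOpen_Ioi (a := q j))
  have hslack : ∀ᶠ b in nhds q, ∀ r : Finset ι × ι,
      slack u r.1 r.2 q < 0 → slack u r.1 r.2 b < 0 :=
    Filter.eventually_all.mpr fun r => Filter.eventually_imp_distrib_left.mpr fun hr =>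
      (LinearMap.continuous_of_finiteDimensional _).continuousAt.eventually_lt_const hr
  obtain ⟨b, ⟨hqb, hb⟩, hslack⟩ := ((mem_closure_iff_frequently.mp
    (closure_minimal hclosure isClosed_closure hmem)).and_eventually hslack).exists
  exact ⟨b, hb, fun j => (hqb j (Set.mem_univ j)).le, fun I j hj =>
    not_lt.mp fun hq => hj.not_gt (hslack (I, j) hq)⟩

end GenericBound

namespace SimplePolytope

variable {ι E : Type*} [DecidableEq ι] [NormedAddCommGroup E] [NormedSpace ℝ E]
  {u : ι → Module.Dual ℝ E}

lemma exists_isGeneric (P : SimplePolytope u) : ∃ c, P.IsGeneric c := by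
  obtain ⟨c, hc⟩ := Module.exists_dual_forall_apply_ne_zero (K := ℝ)
    (fun r : Σ I : P.vertices, I.1 => edgeDir u r.1 r.2) fun r h0 => by
      simpa [h0] using (P.isCoordSystem _ r.1.2).apply_edgeDir r.2.2 r.2
  exact ⟨c, fun I hI i hi => hc ⟨⟨I, hI⟩, ⟨i, hi⟩⟩⟩

variable [FiniteDimensional ℝ E] [MeasurableSpace E] [BorelSpace E]
  (μ : Measure E) [μ.IsAddHaarMeasure]

open Classical in
/-- The polytope `{z | ∀ j, u j z ≤ b j}` defined by a simple right-hand side, weighted by the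
volumes of the parallelepipeds spanned at its vertices. -/
noncomputable def ofIsSimpleBound [Fintype ι] (hu : ∀ d ≠ 0, ∃ j, 0 < u j d) {b : ι → ℝ}
    (hb : IsSimpleBound u b) (hne : (polyhedron u b).Nonempty) : SimplePolytope u where
  vertices := Finset.univ.filter fun I => IsCoordSystem u I ∧ solve u I b ∈ polyhedron u b
  bound := b
  weight := parallelepipedVolume μ u
  nonempty := (exists_isCoordSystem_solve_mem_polyhedron hu hne).imp fun I hI => by simpa using hI
  isCoordSystem I hI := ((Finset.mem_filter_univ I).mp hI).1
  lt_bound I hI j hj :=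
    have h := (Finset.mem_filter_univ I).mp hI
    (h.2 j).lt_of_ne (hb I h.1 j hj)
  exists_exchange I hI i hi := by
    obtain ⟨h, hmem⟩ := (Finset.mem_filter_univ I).mp hI
    have hdir : -edgeDir u I i ≠ 0 := fun h0 => by
      simpa [neg_eq_zero.mp h0] using h.apply_edgeDir hi i
    obtain ⟨k, hk, hzk⟩ := exists_add_smul_mem_polyhedron hu hmem hdir
    have hk' : u k (edgeDir u I i) < 0 := by simpa using hk
    have hkI : k ∉ I := fun hkI => by
      rw [h.apply_edgeDir hkI] at hk'
      split_ifs at hk' <;> linarith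
    have hexch := h.exchange hi hkI hk'.ne
    refine ⟨k, hkI, (Finset.mem_filter_univ _).mpr ⟨hexch, ?_⟩, hk'⟩
    rwa [h.solve_exchange hexch hk'.ne, ← neg_div_neg_eq, neg_div, neg_smul, ← smul_neg, ← map_neg]
  weight_pos I hI := ((Finset.mem_filter_univ I).mp hI).1.parallelepipedVolume_pos
  weight_exchange I hI i hi k hk hI' := by
    have h := ((Finset.mem_filter_univ I).mp hI).1
    have h' := ((Finset.mem_filter_univ _).mp hI').1
    have herase : I.erase i = (insert k (I.erase i)).erase k :=
      (Finset.erase_insert fun hk' => hk (Finset.mem_of_mem_erase hk')).symm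
    exact h.parallelepipedVolume_exchange hi (h'.slope_ne_zero_of_erase_eq h hi herase)

lemma solve_mem_polyhedron_of_mem_vertices [Fintype ι] (hu : ∀ d ≠ 0, ∃ j, 0 < u j d) {b : ι → ℝ}
    (hb : IsSimpleBound u b) (hne : (polyhedron u b).Nonempty) {I : Finset ι}
    (hI : I ∈ (ofIsSimpleBound μ hu hb hne).vertices) : solve u I b ∈ polyhedron u b := by
  classical
  exact ((Finset.mem_filter_univ I).mp hI).2

theorem exists_isNef [Finite ι] (hu : ∀ d ≠ 0, ∃ j, 0 < u j d) {q : ι → ℝ}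
    (hq : (polyhedron u q).Nonempty) :
    ∃ P : SimplePolytope u, (∀ I ∈ P.vertices, P.weight I = parallelepipedVolume μ u I) ∧
      P.IsNef q := by
  cases nonempty_fintype ι
  obtain ⟨b, hb, hqb, hslack⟩ := exists_isSimpleBound u q
  refine ⟨ofIsSimpleBound μ hu hb (hq.mono fun z hz j => (hz j).trans (hqb j)),
    fun _ _ => rfl, fun I hI j => sub_nonneg.mp (hslack I j (sub_nonneg.mpr ?_))⟩
  exact solve_mem_polyhedron_of_mem_vertices μ hu hb _ hI j

end SimplePolytope

/-! ### Mixed volumes of finite sets -/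

section Polarization

variable {κ : Type*} [Fintype κ]

open scoped Classical in
lemma card_filter_bijective :
    Finset.card {p : κ → κ | Function.Bijective p} = (Fintype.card κ).factorial := by
  rw [← Fintype.card_perm, ← Finset.card_univ]
  refine (Finset.card_bij (fun (e : Equiv.Perm κ) _ => ⇑e) (fun e _ => ?_)
    (fun _ _ _ _ h => DFunLike.coe_injective h)
    fun p hp => ⟨Equiv.ofBijective p ?_, Finset.mem_univ _, rfl⟩).symm
  · exact (Finset.mem_filter_univ _).mpr e.bijective
  · exact (Finset.mem_filter_univ _).mp hp

theorem sum_neg_one_pow_mul_sum_pow {R : Type*} [CommRing R] (a : κ → R) :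
    ∑ S : Finset κ, (-1) ^ (Fintype.card κ - S.card) * (∑ i ∈ S, a i) ^ Fintype.card κ =
      (Fintype.card κ).factorial * ∏ i, a i := by
  classical
  let omitting (i : κ) : Finset (κ → κ) := {p | ∀ x, p x ≠ i}
  have hinf (T : Finset κ) : T.inf omitting = Fintype.piFinset fun _ => Tᶜ := by
    ext p
    simp only [omitting, Finset.mem_inf, Finset.mem_filter_univ, Fintype.mem_piFinset,
      Finset.mem_compl]
    exact ⟨fun h x hx => h _ hx x rfl, fun h i hi x hx => h x (hx ▸ hi)⟩
  have hbij : Finset.univ.inf (fun i => (omitting i)ᶜ) =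
      ({p | Function.Bijective p} : Finset (κ → κ)) := by
    ext p
    simp only [omitting, Finset.mem_inf, Finset.mem_univ, true_imp_iff, Finset.mem_compl,
      Finset.mem_filter_univ, not_forall, not_not, ← Finite.surjective_iff_bijective]
    rfl
  have hprod : ∀ p ∈ ({p | Function.Bijective p} : Finset (κ → κ)), ∏ x, a (p x) = ∏ i, a i :=
    fun p hp => ((Finset.mem_filter_univ p).mp hp).prod_comp a
  have key := Finset.inclusion_exclusion_sum_inf_compl Finset.univ omitting fun p => ∏ x, a (p x)
  simp_rw [hinf, ← Finset.prod_univ_sum, Finset.prod_const, Finset.card_univ, hbij,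
    Finset.powerset_univ] at key
  rw [Finset.sum_congr rfl hprod, Finset.sum_const, card_filter_bijective, nsmul_eq_mul] at key
  rw [key, ← (compl_involutive (α := Finset κ)).bijective.sum_comp]
  simp [zsmul_eq_mul, Finset.card_compl, Nat.sub_sub_self (Finset.card_le_univ _)]

lemma SimplePolytope.sum_neg_one_pow_mul_mixedVol_replicate {ι E : Type*} [DecidableEq ι]
    [AddCommGroup E] [Module ℝ E] {u : ι → Module.Dual ℝ E} (P : SimplePolytope u)
    (c : Module.Dual ℝ E) (h : κ → ι → ℝ) :
    ∑ S : Finset κ, (-1) ^ (Fintype.card κ - S.card) *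
        P.mixedVol c ∅ (.replicate (Fintype.card κ) (∑ i ∈ S, h i)) =
      (Fintype.card κ).factorial * P.mixedVol c ∅ (Finset.univ.val.map h) := by
  simp only [mixedVol_empty, Multiset.map_replicate, Multiset.prod_replicate, Multiset.map_map,
    Finset.mul_sum, map_sum]
  rw [Finset.sum_comm]
  refine Finset.sum_congr rfl fun I _ => ?_
  change _ = _ * (_ * ∏ i, c (solve u I (h i)))
  rw [mul_left_comm, ← sum_neg_one_pow_mul_sum_pow, Finset.mul_sum]
  exact Finset.sum_congr rfl fun S _ => mul_left_comm _ _ _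

end Polarization

section SupportNumbers

variable {ι κ E : Type*} [AddCommGroup E] [Module ℝ E]

/-- The support numbers of a finite set `A` with respect to the normals `u`: the least bounds `h`
for which the polyhedron `{z | ∀ j, u j z ≤ h j}` contains `A`. -/
noncomputable def supportNumbers (u : ι → Module.Dual ℝ E) (A : Finset E) : ι → ℝ :=
  fun j => supportFun A (u j)

variable {u : ι → Module.Dual ℝ E} {A B : Finset E}

lemma convexHull_subset_polyhedron :
    convexHull ℝ (A : Set E) ⊆ polyhedron u (supportNumbers u A) :=
  fun _ hz j => le_supportFun_of_mem_convexHull hz (u j)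

lemma supportNumbers_mono (hA : A.Nonempty) (h : A ⊆ B) :
    supportNumbers u A ≤ supportNumbers u B :=
  fun j => supportFun_mono hA h (u j)

lemma supportNumbers_sum [DecidableEq E] {A : κ → Finset E} {T : Finset κ}
    (hA : ∀ k ∈ T, (A k).Nonempty) :
    supportNumbers u (∑ k ∈ T, A k) = ∑ k ∈ T, supportNumbers u (A k) := by
  ext j
  simp [supportNumbers, supportFun_sum hA]

/-- The finite set `A` is cut out by `u`: its convex hull is a polyhedron with normals `u`. -/
def IsCutOut (u : ι → Module.Dual ℝ E) (A : Finset E) : Prop :=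
  convexHull ℝ (A : Set E) = polyhedron u (supportNumbers u A)

/-- The elements of `X`, viewed as a family of facet normals. -/
abbrev normals (X : Finset (Module.Dual ℝ E)) : X → Module.Dual ℝ E := Subtype.val

lemma exists_finset_isCutOut [FiniteDimensional ℝ E] (hA : A.Nonempty) :
    ∃ Φ : Finset (Module.Dual ℝ E), ∀ X : Finset (Module.Dual ℝ E), Φ ⊆ X →
      IsCutOut (normals X) A := by
  obtain ⟨Φ, hΦ⟩ := exists_finset_convexHull_eq (𝕜 := ℝ) hA
  refine ⟨Φ, fun X hX => convexHull_subset_polyhedron.antisymm fun z hz => ?_⟩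
  rw [hΦ]
  exact fun φ hφ => hz ⟨φ, hX hφ⟩

lemma exists_finset_forall_isCutOut [FiniteDimensional ℝ E] (𝓑 : Finset (Finset E))
    (h𝓑 : ∀ B ∈ 𝓑, B.Nonempty) :
    ∃ X : Finset (Module.Dual ℝ E), (∀ d ≠ 0, ∃ j, 0 < normals X j d) ∧
      ∀ B ∈ 𝓑, IsCutOut (normals X) B := by
  classical
  choose! Φ hΦ using fun B (hB : B ∈ 𝓑) => exists_finset_isCutOut (h𝓑 B hB)
  let b := Module.finBasis ℝ E
  let C := Finset.univ.image b.coord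
  refine ⟨𝓑.biUnion Φ ∪ (C ∪ -C), fun d hd => ?_, fun B hB => hΦ B hB _ ?_⟩
  · obtain ⟨i, hi⟩ : ∃ i, b.coord i d ≠ 0 := by
      by_contra! h
      exact hd (b.ext_elem fun i => by simpa using h i)
    have hC : b.coord i ∈ C := Finset.mem_image_of_mem _ (Finset.mem_univ i)
    rcases hi.lt_or_gt with h | h
    · exact ⟨⟨-b.coord i, by simp [hC]⟩, neg_pos.mpr h⟩
    · exact ⟨⟨b.coord i, by simp [hC]⟩, h⟩
  · exact (Finset.subset_biUnion_of_mem Φ hB).trans Finset.subset_union_left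

lemma SimplePolytope.IsNef.of_sum [DecidableEq ι] [DecidableEq E] {P : SimplePolytope u}
    {T : Finset κ} {A : κ → Finset E} (hA : ∀ k ∈ T, (A k).Nonempty)
    (hcut : IsCutOut u (∑ k ∈ T, A k)) (hnef : P.IsNef (supportNumbers u (∑ k ∈ T, A k)))
    {k : κ} (hk : k ∈ T) : P.IsNef (supportNumbers u (A k)) := by
  intro I hI
  have hB := P.isCoordSystem I hI
  obtain ⟨z, hz, hzs⟩ : ∃ z : κ → E, (∀ k ∈ T, z k ∈ convexHull ℝ (A k : Set E)) ∧
      ∑ k ∈ T, z k = solve u I (supportNumbers u (∑ k ∈ T, A k)) := by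
    have hmem := hcut.ge (hnef I hI)
    rw [Finset.coe_sum, convexHull_sum, Set.mem_finsetSum] at hmem
    simpa using hmem
  have hle : ∀ k ∈ T, ∀ j, u j (z k) ≤ supportNumbers u (A k) j :=
    fun k hk => convexHull_subset_polyhedron (hz k hk)
  have heq : solve u I (supportNumbers u (A k)) = z k := hB.ext fun i hi => by
    have hsum : ∑ k ∈ T, u i (z k) = ∑ k ∈ T, supportNumbers u (A k) i := by
      rw [← map_sum, hzs, hB.apply_solve _ hi, supportNumbers_sum hA, Finset.sum_apply]
    rw [hB.apply_solve _ hi]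
    exact ((Finset.sum_eq_sum_iff_of_le fun k hk => hle k hk i).mp hsum k hk).symm
  exact heq ▸ hle k hk

end SupportNumbers

section MixedVolume

variable {κ E : Type*} [Fintype κ] [NormedAddCommGroup E] [NormedSpace ℝ E] [MeasurableSpace E]

/-- The mixed volume of a family of finite sets with respect to `μ`, normalized so that `d` copies
of `A` have mixed volume `d! * μ (convexHull ℝ A)`. The empty subfamily contributes `±μ {0}`, which
vanishes in positive dimension. -/
noncomputable def mixedVolume (μ : Measure E) (A : κ → Finset E) : ℝ :=
  ∑ S : Finset κ, (-1) ^ (Fintype.card κ - S.card) *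
    μ.real (convexHull ℝ (∑ i ∈ S, (A i : Set E)))

variable [FiniteDimensional ℝ E] [BorelSpace E] {μ : Measure E} [μ.IsAddHaarMeasure]
  {A B : κ → Finset E}

lemma mixedVolume_eq_mixedVol [DecidableEq E] {ι : Type*} [Finite ι] [DecidableEq ι]
    {u : ι → Module.Dual ℝ E} {P : SimplePolytope u} {c : Module.Dual ℝ E}
    (hw : ∀ I ∈ P.vertices, P.weight I = parallelepipedVolume μ u I) (hc : P.IsGeneric c)
    (hκ : Fintype.card κ = Module.finrank ℝ E) (hA : ∀ i, (A i).Nonempty)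
    (hP : ∀ S : Finset κ, P.IsNef (supportNumbers u (∑ i ∈ S, A i)) ∧
      IsCutOut u (∑ i ∈ S, A i)) :
    mixedVolume μ A = P.mixedVol c ∅ (Finset.univ.val.map fun i => supportNumbers u (A i)) := by
  have hvol (S : Finset κ) : (Fintype.card κ).factorial *
      μ.real (convexHull ℝ (∑ i ∈ S, (A i : Set E))) =
        P.mixedVol c ∅ (.replicate (Fintype.card κ) (∑ i ∈ S, supportNumbers u (A i))) := by
    rw [← Finset.coe_sum, (hP S).2, hκ, SimplePolytope.factorial_mul_measureReal_polyhedron hw hc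
      (hP S).1, supportNumbers_sum fun i _ => hA i]
  refine mul_left_cancel₀ (Nat.cast_ne_zero.mpr (Fintype.card κ).factorial_ne_zero) ?_
  rw [← SimplePolytope.sum_neg_one_pow_mul_mixedVol_replicate, mixedVolume, Finset.mul_sum]
  exact Finset.sum_congr rfl fun S _ => by rw [mul_left_comm, hvol]

open scoped Classical in
theorem exists_simplePolytope_isNef_isCutOut (μ : Measure E) [μ.IsAddHaarMeasure]
    (𝓑 : Finset (Finset E)) (h𝓑 : ∀ B ∈ 𝓑, B.Nonempty) :
    ∃ (X : Finset (Module.Dual ℝ E)) (P : SimplePolytope (normals X)),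
      (∀ I ∈ P.vertices, P.weight I = parallelepipedVolume μ (normals X) I) ∧
      ∀ B ∈ 𝓑, P.IsNef (supportNumbers (normals X) B) ∧ IsCutOut (normals X) B := by
  have hsum : (∑ B ∈ 𝓑, B).Nonempty := sum_nonempty h𝓑
  obtain ⟨X, hX, hcut⟩ := exists_finset_forall_isCutOut (insert (∑ B ∈ 𝓑, B) 𝓑)
    (Finset.forall_mem_insert _ _ _ |>.mpr ⟨hsum, h𝓑⟩)
  rw [Finset.forall_mem_insert] at hcut
  obtain ⟨P, hw, hnef⟩ := SimplePolytope.exists_isNef μ hX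
    (hsum.to_set.convexHull.mono convexHull_subset_polyhedron)
  exact ⟨X, P, hw, fun B hB => ⟨.of_sum h𝓑 hcut.1 hnef hB, hcut.2 B hB⟩⟩

open scoped Classical in
lemma exists_simplePolytope_forall_mixedVolume_eq (μ : Measure E) [μ.IsAddHaarMeasure]
    (hκ : Fintype.card κ = Module.finrank ℝ E) (𝓐 : Finset (κ → Finset E))
    (h𝓐 : ∀ A ∈ 𝓐, ∀ i, (A i).Nonempty) :
    ∃ (X : Finset (Module.Dual ℝ E)) (P : SimplePolytope (normals X))
      (c : Module.Dual ℝ E), P.IsGeneric c ∧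
      ∀ A ∈ 𝓐, (∀ i, P.IsNef (supportNumbers (normals X) (A i))) ∧ mixedVolume μ A =
        P.mixedVol c ∅ (Finset.univ.val.map fun i => supportNumbers (normals X) (A i)) := by
  let 𝓑 := 𝓐.biUnion fun A => Finset.univ.image fun S : Finset κ => ∑ i ∈ S, A i
  have hmem : ∀ A ∈ 𝓐, ∀ S : Finset κ, ∑ i ∈ S, A i ∈ 𝓑 := fun A hA S =>
    Finset.mem_biUnion.mpr ⟨A, hA, Finset.mem_image_of_mem _ (Finset.mem_univ S)⟩
  obtain ⟨X, P, hw, hP⟩ := exists_simplePolytope_isNef_isCutOut μ 𝓑 fun B hB => by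
    obtain ⟨A, hA, hB⟩ := Finset.mem_biUnion.mp hB
    obtain ⟨S, -, rfl⟩ := Finset.mem_image.mp hB
    exact sum_nonempty fun i _ => h𝓐 A hA i
  obtain ⟨c, hc⟩ := P.exists_isGeneric
  refine ⟨X, P, c, hc, fun A hA => ⟨fun i => ?_, ?_⟩⟩
  · simpa using (hP _ (hmem A hA {i})).1
  · exact mixedVolume_eq_mixedVol hw hc hκ (h𝓐 A hA) fun S => hP _ (hmem A hA S)

variable (μ) in
theorem mixedVolume_nonneg (hκ : Fintype.card κ = Module.finrank ℝ E)
    (hA : ∀ i, (A i).Nonempty) : 0 ≤ mixedVolume μ A := by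
  classical
  obtain ⟨X, P, c, hc, hP⟩ := exists_simplePolytope_forall_mixedVolume_eq μ hκ {A} (by simpa)
  obtain ⟨hnef, heq⟩ := hP A (Finset.mem_singleton_self A)
  rw [heq]
  exact SimplePolytope.mixedVol_nonneg hc (by simpa using hnef) (by simpa using hκ)

lemma map_val_eq_cons {α β : Type*} [DecidableEq α] {s : Finset α} {a : α} (ha : a ∈ s)
    {f g : α → β} (h : ∀ k ∈ s.erase a, f k = g k) :
    s.val.map f = f a ::ₘ (s.erase a).val.map g := by
  rw [← Multiset.map_congr rfl h, ← Multiset.map_cons, Finset.erase_val,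
    Multiset.cons_erase (Finset.mem_val.mpr ha)]

lemma mixedVolume_le_update [DecidableEq κ] (hκ : Fintype.card κ = Module.finrank ℝ E)
    (hA : ∀ i, (A i).Nonempty) {i : κ} {C : Finset E} (hC : A i ⊆ C) :
    mixedVolume μ A ≤ mixedVolume μ (Function.update A i C) := by
  classical
  have hA' : ∀ k, (Function.update A i C k).Nonempty :=
    (Function.forall_update_iff A _).mpr ⟨(hA i).mono hC, fun k _ => hA k⟩
  obtain ⟨X, P, c, hc, hP⟩ := exists_simplePolytope_forall_mixedVolume_eq μ hκ
    {A, Function.update A i C} (by simp [hA, hA'])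
  obtain ⟨⟨hnef, heq⟩, -, heq'⟩ : _ ∧ _ := by simpa using hP
  rw [heq, heq', map_val_eq_cons (g := fun k => supportNumbers (normals X) (A k))
    (Finset.mem_univ i) fun _ _ => rfl, map_val_eq_cons (Finset.mem_univ i) fun k hk => by
      rw [Function.update_of_ne (Finset.ne_of_mem_erase hk)], Function.update_self]
  refine SimplePolytope.mixedVol_cons_le_of_le hc (fun f hf => ?_) ?_
    (supportNumbers_mono (hA i) hC)
  · obtain ⟨k, -, rfl⟩ := Multiset.mem_map.mp hf
    exact hnef k
  · rw [Multiset.card_map, Finset.card_val, Finset.card_erase_add_one (Finset.mem_univ i),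
      Finset.card_univ, hκ]

theorem mixedVolume_mono (hκ : Fintype.card κ = Module.finrank ℝ E)
    (hA : ∀ i, (A i).Nonempty) (hAB : ∀ i, A i ⊆ B i) : mixedVolume μ A ≤ mixedVolume μ B := by
  classical
  suffices h : ∀ T : Finset κ, mixedVolume μ A ≤ mixedVolume μ (T.piecewise B A) by
    simpa using h Finset.univ
  intro T
  induction T using Finset.induction_on with
  | empty => simp
  | insert i T hi ih =>
    rw [Finset.piecewise_insert]
    refine ih.trans (mixedVolume_le_update hκ (fun k => ?_) ?_)
    · exact Finset.piecewise_cases T B A Finset.Nonempty ((hA k).mono (hAB k)) (hA k)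
    · rw [Finset.piecewise_eq_of_notMem _ _ _ hi]
      exact hAB i

theorem mixedVolume_update_mul_mixedVolume_update_le_sq [DecidableEq κ]
    (hκ : Fintype.card κ = Module.finrank ℝ E) (hA : ∀ i, (A i).Nonempty) {i j : κ} (hij : i ≠ j) :
    mixedVolume μ (Function.update A j (A i)) * mixedVolume μ (Function.update A i (A j)) ≤
      mixedVolume μ A ^ 2 := by
  classical
  have hA' : ∀ i j k, (Function.update A j (A i) k).Nonempty := fun i j =>
    (Function.forall_update_iff A fun _ C => C.Nonempty).mpr ⟨hA i, fun k _ => hA k⟩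
  obtain ⟨X, P, c, hc, hP⟩ := exists_simplePolytope_forall_mixedVolume_eq μ hκ
    {A, Function.update A j (A i), Function.update A i (A j)} (by simp [hA, hA'])
  obtain ⟨⟨hnef, heq⟩, ⟨-, heq'⟩, -, heq''⟩ : _ ∧ _ ∧ _ := by simpa using hP
  let m := ((Finset.univ.erase i).erase j).val.map fun k => supportNumbers (normals X) (A k)
  have hcons (C : κ → Finset E) (hC : ∀ k, k ≠ i → k ≠ j → C k = A k) :
      Finset.univ.val.map (fun k => supportNumbers (normals X) (C k)) =
        supportNumbers (normals X) (C i) ::ₘ supportNumbers (normals X) (C j) ::ₘ m := by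
    have hj : j ∈ Finset.univ.erase i := Finset.mem_erase.mpr ⟨hij.symm, Finset.mem_univ j⟩
    rw [map_val_eq_cons (Finset.mem_univ i) fun _ _ => rfl, map_val_eq_cons hj fun k hk => ?_]
    rw [hC k (Finset.ne_of_mem_erase (Finset.mem_of_mem_erase hk)) (Finset.ne_of_mem_erase hk)]
  have hm : m.card + 2 = Module.finrank ℝ E := by
    rw [← hκ, ← Finset.card_univ, Multiset.card_map, Finset.card_val,
      ← Finset.card_erase_add_one (Finset.mem_univ i),
      ← Finset.card_erase_add_one (Finset.mem_erase.mpr ⟨hij.symm, Finset.mem_univ j⟩)]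
  rw [heq, heq', heq'', hcons A fun _ _ _ => rfl,
    hcons _ fun k _ hk => Function.update_of_ne hk _ _,
    hcons _ fun k hk _ => Function.update_of_ne hk _ _, Function.update_self, Function.update_self,
    Function.update_of_ne hij, Function.update_of_ne hij.symm]
  refine SimplePolytope.mixedVol_mul_mixedVol_le_sq hc (fun f hf => ?_) hm _ (hnef j)
  obtain ⟨k, -, rfl⟩ := Multiset.mem_map.mp hf
  exact hnef k

end MixedVolume

section Segments

variable {κ E : Type*} [NormedAddCommGroup E] [NormedSpace ℝ E]

lemma convexHull_sum_pair (a b : κ → E) (S : Finset κ) :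
    convexHull ℝ (∑ i ∈ S, ({a i, b i} : Set E)) =
      (∑ i ∈ S, a i) +ᵥ ∑ i ∈ S, segment ℝ 0 (b i - a i) := by
  have hseg (i : κ) : segment ℝ (a i) (b i) = {a i} + segment ℝ 0 (b i - a i) := by
    rw [Set.singleton_add, segment_translate_image, add_zero, add_sub_cancel]
  simp_rw [convexHull_sum, convexHull_pair, hseg, Finset.sum_add_distrib]
  rw [← Set.singleton_vadd, vadd_eq_add]
  congr 1
  exact (map_sum (Set.singletonAddMonoidHom : E →+ Set E) a S).symm

variable [FiniteDimensional ℝ E] [MeasurableSpace E] [BorelSpace E] {μ : Measure E}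
  [μ.IsAddHaarMeasure]

lemma measureReal_sum_segment_eq_zero (v : κ → E) {S : Finset κ}
    (hS : S.card < Module.finrank ℝ E) : μ.real (∑ i ∈ S, segment ℝ 0 (v i)) = 0 := by
  classical
  let L := Submodule.span ℝ (S.image v : Set E)
  have hsub : ∑ i ∈ S, segment ℝ 0 (v i) ⊆ L := fun x hx => by
    rw [Set.mem_finsetSum] at hx
    obtain ⟨z, hz, rfl⟩ := hx
    exact L.sum_mem fun i hi => L.convex.segment_subset L.zero_mem
      (Submodule.subset_span (Finset.mem_coe.mpr (Finset.mem_image_of_mem v hi))) (hz hi)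
  have hL : L ≠ ⊤ := fun h => by
    have hle : Module.finrank ℝ L ≤ S.card :=
      (finrank_span_finset_le_card _).trans Finset.card_image_le
    rw [h, finrank_top] at hle
    exact absurd hle hS.not_ge
  rw [measureReal_def, measure_mono_null hsub (Measure.addHaar_submodule μ L hL),
    ENNReal.toReal_zero]

lemma mixedVolume_pair [Fintype κ] [DecidableEq E] (hκ : Fintype.card κ = Module.finrank ℝ E)
    (a b : κ → E) :
    mixedVolume μ (fun i => {a i, b i}) = μ.real (parallelepiped fun i => b i - a i) := by
  have hterm (S : Finset κ) : μ.real (convexHull ℝ (∑ i ∈ S, (({a i, b i} : Finset E) : Set E))) =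
      μ.real (∑ i ∈ S, segment ℝ 0 (b i - a i)) := by
    simp only [Finset.coe_pair]
    rw [convexHull_sum_pair, measureReal_def, measure_vadd, measureReal_def]
  simp_rw [mixedVolume, hterm]
  rw [Finset.sum_eq_single Finset.univ _ (by simp), parallelepiped_eq_sum_segment]
  · simp
  · intro S _ hS
    rw [measureReal_sum_segment_eq_zero _ (hκ ▸ (Finset.card_lt_iff_ne_univ S).mpr hS), mul_zero]

lemma volume_real_parallelepiped_pi [Fintype κ] [DecidableEq κ] (v : κ → κ → ℝ) :
    volume.real (parallelepiped v) = |(Matrix.of v).det| := by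
  have h := Measure.addHaar_parallelepiped (Pi.basisFun ℝ κ) v
  rw [Module.Basis.addHaar_def, Module.Basis.parallelepiped_basisFun,
    addHaarMeasure_eq_volume_pi, Pi.basisFun_det] at h
  rw [measureReal_def, h, ENNReal.toReal_ofReal (abs_nonneg _)]
  rfl

end Segments

/-! ### Rado's theorem for linear matroids -/

section Rado

variable {κ K E : Type*} [Field K] [AddCommGroup E] [Module K E]

variable (K) in
/-- The span of the union of the sets `X i`, `i ∈ I`. Its dimension is the rank of that union in the
linear matroid of `E`, the quantity bounded below in Rado's condition. -/
def spanUnion (X : κ → Finset E) (I : Finset κ) : Submodule K E :=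
  Submodule.span K (⋃ i ∈ I, (X i : Set E))

lemma mem_spanUnion {X : κ → Finset E} {I : Finset κ} {i : κ} (hi : i ∈ I) {x : E}
    (hx : x ∈ X i) : x ∈ spanUnion K X I :=
  Submodule.subset_span (Set.mem_biUnion hi hx)

lemma spanUnion_le {X : κ → Finset E} {I : Finset κ} {P : Submodule K E} :
    spanUnion K X I ≤ P ↔ ∀ i ∈ I, ∀ x ∈ X i, x ∈ P := by
  rw [spanUnion, Submodule.span_le, Set.iUnion₂_subset_iff]
  rfl

variable (K) in
/-- Rado's condition for the family `X` to have a linearly independent transversal. -/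
def RadoCondition (X : κ → Finset E) : Prop :=
  ∀ I : Finset κ, I.card ≤ Module.finrank K (spanUnion K X I)

lemma RadoCondition.nonempty {X : κ → Finset E} (hX : RadoCondition K X) (i : κ) :
    (X i).Nonempty := by
  by_contra h
  have hbot : spanUnion K X {i} = ⊥ := by
    simp [spanUnion, Finset.not_nonempty_iff_eq_empty.mp h]
  have hi := hX {i}
  rw [hbot] at hi
  simp at hi

lemma linearIndependent_of_radoCondition_singleton [Finite κ] {v : κ → E}
    (hv : RadoCondition K fun i => {v i}) : LinearIndependent K v := by
  cases nonempty_fintype κ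
  have hspan : spanUnion K (fun i => {v i}) Finset.univ = Submodule.span K (Set.range v) := by
    simp [spanUnion]
  rw [linearIndependent_iff_card_le_finrank_span, Set.finrank, ← hspan]
  exact hv Finset.univ

section Erase

variable [DecidableEq κ] [DecidableEq E]

lemma mem_spanUnion_update_erase {X : κ → Finset E} {I : Finset κ} {i o : κ} (hi : i ∈ I)
    {x z : E} (hx : x ∈ X i) (hxz : i = o → x ≠ z) :
    x ∈ spanUnion K (Function.update X o ((X o).erase z)) I := by
  refine mem_spanUnion hi ?_
  rcases eq_or_ne i o with rfl | hio
  · rw [Function.update_self]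
    exact Finset.mem_erase.mpr ⟨hxz rfl, hx⟩
  · rwa [Function.update_of_ne hio]

lemma RadoCondition.exists_of_not_update_erase {X : κ → Finset E} (hX : RadoCondition K X)
    [FiniteDimensional K E] {o : κ} {z : E}
    (hz : ¬ RadoCondition K (Function.update X o ((X o).erase z))) :
    ∃ I : Finset κ, o ∈ I ∧
      Module.finrank K (spanUnion K (Function.update X o ((X o).erase z)) I) < I.card := by
  simp only [RadoCondition, not_forall, not_le] at hz
  obtain ⟨I, hI⟩ := hz
  refine ⟨I, by_contra fun ho => hI.not_ge ((hX I).trans (Submodule.finrank_mono ?_)), hI⟩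
  exact spanUnion_le.mpr fun i hi x hx =>
    mem_spanUnion_update_erase hi hx fun h => absurd (h ▸ hi) ho

lemma RadoCondition.update_erase_or [FiniteDimensional K E] {X : κ → Finset E}
    (hX : RadoCondition K X) (o : κ) {x y : E} (hxy : x ≠ y) :
    RadoCondition K (Function.update X o ((X o).erase x)) ∨
      RadoCondition K (Function.update X o ((X o).erase y)) := by
  by_contra! h
  obtain ⟨I, hoI, hI⟩ := hX.exists_of_not_update_erase h.1
  obtain ⟨J, hoJ, hJ⟩ := hX.exists_of_not_update_erase h.2
  set P := spanUnion K (Function.update X o ((X o).erase x)) I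
  set Q := spanUnion K (Function.update X o ((X o).erase y)) J
  have hsup : spanUnion K X (I ∪ J) ≤ P ⊔ Q := spanUnion_le.mpr fun i hi w hw => by
    by_cases hx : i = o → w ≠ x
    · by_cases hy : i = o → w ≠ y
      · rcases Finset.mem_union.mp hi with hi | hi
        · exact Submodule.mem_sup_left (mem_spanUnion_update_erase hi hw hx)
        · exact Submodule.mem_sup_right (mem_spanUnion_update_erase hi hw hy)
      · push Not at hy
        exact Submodule.mem_sup_left (mem_spanUnion_update_erase (hy.1 ▸ hoI) hw hx)
    · push Not at hx
      exact Submodule.mem_sup_right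
        (mem_spanUnion_update_erase (hx.1 ▸ hoJ) hw fun _ => hx.2 ▸ hxy)
  have hinf : spanUnion K X ((I ∩ J).erase o) ≤ P ⊓ Q := spanUnion_le.mpr fun i hi w hw => by
    obtain ⟨hio, hi⟩ := Finset.mem_erase.mp hi
    obtain ⟨hiI, hiJ⟩ := Finset.mem_inter.mp hi
    exact ⟨mem_spanUnion_update_erase hiI hw (absurd · hio),
      mem_spanUnion_update_erase hiJ hw (absurd · hio)⟩
  have hoIJ : o ∈ I ∩ J := Finset.mem_inter.mpr ⟨hoI, hoJ⟩
  have hunion := (hX _).trans (Submodule.finrank_mono hsup)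
  have hinter := (hX _).trans (Submodule.finrank_mono hinf)
  have hrank := Submodule.finrank_sup_add_finrank_inf_eq P Q
  have hcard := Finset.card_union_add_card_inter I J
  have hpos := Finset.card_pos.mpr ⟨o, hoIJ⟩
  rw [Finset.card_erase_of_mem hoIJ] at hinter
  omega

end Erase

theorem RadoCondition.exists_linearIndependent [FiniteDimensional K E] [Finite κ]
    {X : κ → Finset E} (hX : RadoCondition K X) :
    ∃ v : κ → E, (∀ i, v i ∈ X i) ∧ LinearIndependent K v := by
  classical
  cases nonempty_fintype κ
  induction hn : ∑ i, (X i).card using Nat.strong_induction_on generalizing X with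
  | _ n ih =>
    by_cases hone : ∀ i, (X i).card = 1
    · choose v hv using fun i => Finset.card_eq_one.mp (hone i)
      obtain rfl : X = fun i => {v i} := funext hv
      exact ⟨v, by simp, linearIndependent_of_radoCondition_singleton hX⟩
    · obtain ⟨o, ho⟩ := not_forall.mp hone
      have hcard : 1 < (X o).card := by
        have := Finset.card_pos.mpr (hX.nonempty o)
        omega
      obtain ⟨x, hx, y, hy, hxy⟩ := Finset.one_lt_card.mp hcard
      obtain ⟨z, hz, hXz⟩ :
          ∃ z ∈ X o, RadoCondition K (Function.update X o ((X o).erase z)) :=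
        (hX.update_erase_or o hxy).elim (fun h => ⟨x, hx, h⟩) fun h => ⟨y, hy, h⟩
      have hsub : Function.update X o ((X o).erase z) ≤ X :=
        update_le_self_iff.mpr (Finset.erase_subset z _)
      obtain ⟨v, hv, hli⟩ := ih _ (hn ▸ Finset.sum_lt_sum
        (fun i _ => Finset.card_le_card (hsub i)) ⟨o, Finset.mem_univ o, by
          rw [Function.update_self]
          exact Finset.card_erase_lt_of_mem hz⟩) hXz rfl
      exact ⟨v, fun i => hsub i (hv i), hli⟩

end Rado

/-! ### Linearly independent tuples of finite lattice sets -/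

lemma finrank_comap_restrictScalars_le {R K M V : Type*} [CommRing R] [Field K] [Algebra R K]
    [IsFractionRing R K] [AddCommGroup M] [Module R M] [AddCommGroup V] [Module R V] [Module K V]
    [IsScalarTower R K V] {f : M →ₗ[R] V} (hf : Function.Injective f) (P : Submodule K V)
    [FiniteDimensional K P] :
    Module.finrank R ((P.restrictScalars R).comap f) ≤ Module.finrank K P := by
  obtain ⟨b, hb⟩ := exists_linearIndependent_of_le_finrank
    (le_refl (Module.finrank R ((P.restrictScalars R).comap f)))
  have hfb : LinearIndependent R fun k => f (b k) :=
    (hb.map' _ (Submodule.ker_subtype _)).map' f (LinearMap.ker_eq_bot.mpr hf)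
  rw [LinearIndependent.iff_fractionRing R K] at hfb
  have hP : LinearIndependent K fun k => (⟨f (b k), (b k).2⟩ : P) := .of_comp P.subtype hfb
  simpa using hP.fintype_card_le_finrank

lemma one_le_abs_det_of_linearIndependent {κ : Type*} [Fintype κ] [DecidableEq κ]
    {Z : Matrix κ κ ℤ} (hZ : LinearIndependent ℚ (Z.map (Int.cast : ℤ → ℚ)).row) :
    1 ≤ |(Z.map (Int.cast : ℤ → ℝ)).det| := by
  have hdet : Z.det ≠ 0 := fun h => by
    rw [Matrix.linearIndependent_rows_iff_isUnit, Matrix.isUnit_iff_isUnit_det,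
      ← Int.cast_det, h, Int.cast_zero] at hZ
    exact not_isUnit_zero hZ
  rw [← Int.cast_det, ← Int.cast_abs]
  exact_mod_cast Int.one_le_abs hdet

section Lattice

variable {n : ℕ}

/-- The embedding of the lattice `ℤⁿ` into `ℚⁿ`, where ranks of subgroups become dimensions. -/
def toQ (n : ℕ) : (Fin n → ℤ) →ₗ[ℤ] (Fin n → ℚ) :=
  (Algebra.linearMap ℤ ℚ).compLeft (Fin n)

lemma toQ_injective : Function.Injective (toQ n) :=
  Int.cast_injective.comp_left

/-- The images in `ℚⁿ` of the differences of elements of `s`. -/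
def differences (s : Finset (Fin n → ℤ)) : Finset (Fin n → ℚ) :=
  (s ×ˢ s).image fun p => toQ n (p.2 - p.1)

lemma translatesInto_comap_toQ {s : Finset (Fin n → ℤ)} {P : Submodule ℚ (Fin n → ℚ)}
    (hs : ∀ x ∈ differences s, x ∈ P) :
    TranslatesInto s ((P.restrictScalars ℤ).comap (toQ n)) := by
  rcases s.eq_empty_or_nonempty with rfl | ⟨v, hv⟩
  · exact ⟨0, by simp⟩
  · exact ⟨v, fun a ha => hs _ (Finset.mem_image.mpr ⟨(v, a), Finset.mk_mem_product hv ha, rfl⟩)⟩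

lemma LinIndepTuple.radoCondition {A : Fin n → Finset (Fin n → ℤ)} (hA : LinIndepTuple A) :
    RadoCondition ℚ fun i => differences (A i) := by
  intro I
  by_contra! hI
  have hIn : I.card ≤ n := by simpa using Finset.card_le_univ I
  have hrank := finrank_comap_restrictScalars_le (toQ_injective (n := n))
    (spanUnion ℚ (fun i => differences (A i)) I)
  exact hA ⟨n - I.card + 1, I, _, by omega, by omega, by omega, by omega, fun i hi =>
    translatesInto_comap_toQ fun x hx => mem_spanUnion hi hx⟩

lemma LinIndepTuple.exists_one_le_abs_det {A : Fin n → Finset (Fin n → ℤ)}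
    (hA : LinIndepTuple A) :
    ∃ a b : Fin n → Fin n → ℤ, (∀ i, a i ∈ A i) ∧ (∀ i, b i ∈ A i) ∧
      1 ≤ |(Matrix.of fun i => toR (b i) - toR (a i)).det| := by
  obtain ⟨v, hv, hli⟩ := hA.radoCondition.exists_linearIndependent
  simp only [differences, Finset.mem_image, Finset.mem_product, Prod.exists] at hv
  choose a b hab hv using hv
  let Z : Matrix (Fin n) (Fin n) ℤ := .of fun i => b i - a i
  have hZℚ : (Z.map (Int.cast : ℤ → ℚ)).row = v := by
    ext i j
    simp [Z, ← hv, toQ]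
  have hZℝ : Z.map (Int.cast : ℤ → ℝ) = .of fun i => toR (b i) - toR (a i) := by
    ext i j
    simp [Z, toR]
  exact ⟨a, b, fun i => (hab i).1, fun i => (hab i).2,
    hZℝ ▸ one_le_abs_det_of_linearIndependent (hZℚ ▸ hli)⟩

lemma LinIndepTuple.nonempty {A : Fin n → Finset (Fin n → ℤ)} (hA : LinIndepTuple A) (i : Fin n) :
    (A i).Nonempty := by
  obtain ⟨a, -, ha, -⟩ := hA.exists_one_le_abs_det
  exact ⟨a i, ha i⟩

variable [NeZero n]

lemma MV_eq_mixedVolume (A : Fin n → Finset (Fin n → ℤ)) :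
    MV A = mixedVolume volume fun i => (A i).image toR := by
  rw [MV, mixedVolume, Finset.powerset_univ, Fintype.card_fin]
  simp_rw [Finset.coe_image]
  refine Finset.sum_filter_of_ne fun S _ hS => Finset.nonempty_iff_ne_empty.mpr ?_
  rintro rfl
  simp [← Set.singleton_zero] at hS

lemma MV_nonneg {A : Fin n → Finset (Fin n → ℤ)} (hA : ∀ i, (A i).Nonempty) : 0 ≤ MV A := by
  rw [MV_eq_mixedVolume]
  exact mixedVolume_nonneg volume (by simp) fun i => (hA i).image toR

lemma LinIndepTuple.one_le_MV {A : Fin n → Finset (Fin n → ℤ)} (hA : LinIndepTuple A) :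
    1 ≤ MV A := by
  obtain ⟨a, b, ha, hb, hdet⟩ := hA.exists_one_le_abs_det
  calc
    1 ≤ mixedVolume volume fun i => {toR (a i), toR (b i)} := by
      rwa [mixedVolume_pair (by simp), volume_real_parallelepiped_pi]
    _ ≤ mixedVolume volume fun i => (A i).image toR :=
      mixedVolume_mono (by simp) (by simp) fun i => by
        simp only [Finset.insert_subset_iff, Finset.singleton_subset_iff]
        exact ⟨Finset.mem_image_of_mem _ (ha i), Finset.mem_image_of_mem _ (hb i)⟩
    _ = MV A := (MV_eq_mixedVolume A).symm

lemma MV_update_mul_MV_update_le_sq {A : Fin n → Finset (Fin n → ℤ)} (hA : ∀ i, (A i).Nonempty)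
    {i j : Fin n} (hij : i ≠ j) :
    MV (Function.update A j (A i)) * MV (Function.update A i (A j)) ≤ MV A ^ 2 := by
  have himage (k l : Fin n) : (fun m => (Function.update A k (A l) m).image toR) =
      Function.update (fun m => (A m).image toR) k ((A l).image toR) :=
    funext (Function.apply_update (fun _ s => s.image toR) A k (A l))
  simp_rw [MV_eq_mixedVolume, himage]
  exact mixedVolume_update_mul_mixedVolume_update_le_sq (by simp) (fun k => (hA k).image toR) hij

end Lattice

theorem af_descendant_inequality_general {N : ℕ} (B : Fin N → Finset (Fin N → ℤ)) {i j : Fin N}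
    (hij : i ≠ j) (hne : (B i).Nonempty) (h : LinIndepTuple (Function.update B i (B j))) :
    MV (Function.update B j (B i)) ≤ MV B ^ 2 := by
  have : NeZero N := ⟨i.pos.ne'⟩
  have hB (k : Fin N) : (B k).Nonempty := by
    rcases eq_or_ne k i with rfl | hk
    · exact hne
    · simpa [hk] using h.nonempty k
  have hB' : 0 ≤ MV (Function.update B j (B i)) := MV_nonneg <|
    Function.forall_update_iff B (fun _ s => s.Nonempty) |>.mpr ⟨hne, fun k _ => hB k⟩
  calc
    MV (Function.update B j (B i))
      ≤ MV (Function.update B j (B i)) * MV (Function.update B i (B j)) :=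
        le_mul_of_one_le_right hB' h.one_le_MV
    _ ≤ MV B ^ 2 := MV_update_mul_MV_update_le_sq hB hij

/-- the Aleksandrov–Fenchel inequality (*): if both AF-descendants
`B' = (B₁,B₁,B₃,…,B_N)` and `B'' = (B₂,B₂,B₃,…,B_N)` of the tuple `B = (B₁,…,B_N)` are
linearly independent, then `MV(B') ≤ MV(B)²`. -/
theorem af_descendant_inequality (N : ℕ) (hN : 2 ≤ N) (B : Fin N → Finset (Fin N → ℤ))
    (h' : LinIndepTuple (Function.update B ⟨1, by omega⟩ (B ⟨0, by omega⟩)))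
    (h'' : LinIndepTuple (Function.update B ⟨0, by omega⟩ (B ⟨1, by omega⟩))) :
    MV (Function.update B ⟨1, by omega⟩ (B ⟨0, by omega⟩)) ≤ (MV B) ^ 2 := by
  refine af_descendant_inequality_general B (by simp) ?_ h''
  simpa [Function.update_apply] using h'.nonempty ⟨0, by omega⟩

end Esterov
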